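/- arXiv:2412.20729 — 3 statements merged into one kernel-verified Lean document; each statement's English description precedes it below -/
import Mathlib

section
/- If G is an n-vertex 2-connected chordal graph, then lct(G) ≤ 4(1 + ⌊log₂ n⌋). -/
open SimpleGraph

/-- A graph is chordal if every cycle on at least 4 vertices has a chord
(an edge of the graph joining two vertices of the cycle that is not an edge of the cycle). -/
def IsChordal {V : Type} (G : SimpleGraph V) : Prop :=
  ∀ (v : V) (c : G.Walk v v), c.IsCycle → 4 ≤ c.length →
    ∃ a b : V, a ∈ c.support ∧ b ∈ c.support ∧ G.Adj a b ∧ s(a, b) ∉ c.edges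

/-- A tree representation of `G` with host tree `T`: each vertex `u` of `G` gets a
nonempty subtree `S u` of `T`, and distinct vertices are adjacent iff their subtrees meet. -/
structure TreeRep {V W : Type} (G : SimpleGraph V) (T : SimpleGraph W) : Type where
  isTree : T.IsTree
  S : V → Set W
  subtree_connected : ∀ u : V, (T.induce (S u)).Connected
  adj_iff : ∀ u v : V, u ≠ v → (G.Adj u v ↔ (S u ∩ S v).Nonempty)

/-- A tree representation is minimal if no tree representation of `G` has a host tree
with fewer vertices. -/
def TreeRep.IsMinimal {V W : Type} [Fintype W] {G : SimpleGraph V} {T : SimpleGraph W}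
    (_R : TreeRep G T) : Prop :=
  ∀ (W' : Type) [Fintype W'] (T' : SimpleGraph W'),
    Nonempty (TreeRep G T') → Fintype.card W ≤ Fintype.card W'

/-- The bag of a host tree vertex `x`. -/
def TreeRep.bag {V W : Type} {G : SimpleGraph V} {T : SimpleGraph W}
    (R : TreeRep G T) (x : W) : Set V :=
  {u : V | x ∈ R.S u}

/-- In `T` rooted at `r`, the (vertex set of the) subtree rooted at `x`: all vertices `w`
such that the `r`–`w` path contains `x`. -/
def rootedSubtree {W : Type} (T : SimpleGraph W) (r x : W) : Set W :=
  {w : W | ∀ p : T.Walk r w, p.IsPath → x ∈ p.support}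

/-- The core of a subgraph `H` of `G`: the union over edges `uv` of `H` of `V(S u ∩ S v)`,
a set of host-tree vertices. -/
def TreeRep.core {V W : Type} {G : SimpleGraph V} {T : SimpleGraph W}
    (R : TreeRep G T) (H : G.Subgraph) : Set W :=
  {t : W | ∃ u v : V, H.Adj u v ∧ t ∈ R.S u ∧ t ∈ R.S v}

/-- `C` is a connected component of the subgraph of `T` induced on the vertex set `s`. -/
def IsCompOf {W : Type} (T : SimpleGraph W) (s C : Set W) : Prop :=
  C.Nonempty ∧ C ⊆ s ∧ (T.induce C).Connected ∧
    ∀ ⦃a b : W⦄, a ∈ C → b ∈ s → T.Adj a b → b ∈ C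

/-- A graph is 2-connected if it has more than 2 vertices and deleting any one vertex
leaves it connected. -/
def TwoConnected {V : Type} (G : SimpleGraph V) : Prop :=
  2 < Nat.card V ∧ ∀ v : V, (G.induce {v}ᶜ).Connected

/-- `G` is `k`-connected: more than `k` vertices, and deleting fewer than `k` vertices
leaves it connected. -/
def IsKConnectedGraph {V : Type} (G : SimpleGraph V) (k : ℕ) : Prop :=
  k < Nat.card V ∧ ∀ s : Set V, s.Finite → s.ncard < k → (G.induce sᶜ).Connected

/-- The vertex connectivity `κ(G)`: the maximum `k` such that `G` is `k`-connected. -/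
noncomputable def vertexConnectivity {V : Type} (G : SimpleGraph V) : ℕ :=
  sSup {k : ℕ | IsKConnectedGraph G k}

/-- `p` is a path of maximum length in `G`. -/
def IsLongestPath {V : Type} (G : SimpleGraph V) {a b : V} (p : G.Walk a b) : Prop :=
  p.IsPath ∧ ∀ (c d : V) (q : G.Walk c d), q.IsPath → q.length ≤ p.length

/-- `c` is a cycle of maximum length in `G`. -/
def IsLongestCycle {V : Type} (G : SimpleGraph V) {a : V} (c : G.Walk a a) : Prop :=
  c.IsCycle ∧ ∀ (d : V) (q : G.Walk d d), q.IsCycle → q.length ≤ c.length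

/-- The longest path transversal number of `G`: the least size of a set of vertices
meeting every longest path. -/
noncomputable def lpt {V : Type} (G : SimpleGraph V) : ℕ :=
  sInf {k : ℕ | ∃ A : Set V, A.Finite ∧ A.ncard = k ∧
    ∀ (a b : V) (p : G.Walk a b), IsLongestPath G p → ∃ v ∈ A, v ∈ p.support}

/-- The longest cycle transversal number of `G`: the least size of a set of vertices
meeting every longest cycle. -/
noncomputable def lct {V : Type} (G : SimpleGraph V) : ℕ :=
  sInf {k : ℕ | ∃ A : Set V, A.Finite ∧ A.ncard = k ∧
    ∀ (a : V) (c : G.Walk a a), IsLongestCycle G c → ∃ v ∈ A, v ∈ c.support}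

/-- `DQX T q X Q0`: the union, over `y ∈ Q0`, of the component of `X − E(Q)` containing
`y` (all vertices joined to some `y ∈ Q0` by a walk inside `X` avoiding the edges of `q`). -/
def DQX {W : Type} (T : SimpleGraph W) {x z : W} (q : T.Walk x z) (X : Set W)
    (Q0 : Set W) : Set W :=
  {w : W | ∃ y ∈ Q0, ∃ d : (T.deleteEdges {e : Sym2 W | e ∈ q.edges}).Walk y w,
    ∀ a ∈ d.support, a ∈ X}

/-- Cutter can force the Cutter–Chooser game from position `(X, x)` (a subtree `X` of the
host tree, rooted at `x`) to end within `t` rounds: Cutter picks `z ∈ X` and cuts along the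
`x`–`z` path `Q` in `X`; either `X = Q` (game over), or for every component `X'` of
`X − V(Q)` (with its root `x'`, the vertex of `X'` adjacent to `Q`) that Chooser may pick,
Cutter wins within `t - 1` further rounds. -/
def cutterWins {W : Type} (T : SimpleGraph W) : ℕ → Set W → W → Prop
  | 0, _, _ => False
  | t + 1, X, x =>
      ∃ z ∈ X, ∃ p : T.Walk x z, p.IsPath ∧ (∀ w ∈ p.support, w ∈ X) ∧
        (X = {w : W | w ∈ p.support} ∨
          ∀ (X' : Set W) (x' : W), IsCompOf T (X \ {w : W | w ∈ p.support}) X' →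
            x' ∈ X' → (∃ u ∈ p.support, T.Adj u x') → cutterWins T t X' x')

/-- `ccg(X, x)`: the number of rounds of the Cutter–Chooser game on the subtree `X` of the
host tree rooted at `x`, under optimal play. -/
noncomputable def ccgOn {W : Type} (T : SimpleGraph W) (X : Set W) (x : W) : ℕ :=
  sInf {t : ℕ | cutterWins T t X x}

/-- `ccg(T)`: the minimum over roots `r` of `ccg(T, r)`. -/
noncomputable def ccg {W : Type} (T : SimpleGraph W) : ℕ :=
  sInf (Set.range fun r : W => ccgOn T Set.univ r)

/-- A subdivided caterpillar: a tree having a (spine) path containing every vertex of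
degree at least 3. -/
def IsSubdividedCaterpillar {W : Type} (T : SimpleGraph W) : Prop :=
  T.IsTree ∧ ∃ (a b : W) (q : T.Walk a b), q.IsPath ∧
    ∀ v : W, 3 ≤ (T.neighborSet v).ncard → v ∈ q.support

/-- A subdivided star: a tree with at most one vertex of degree at least 3. -/
def IsSubdividedStar {W : Type} (T : SimpleGraph W) : Prop :=
  T.IsTree ∧ ∀ v w : W, 3 ≤ (T.neighborSet v).ncard → 3 ≤ (T.neighborSet w).ncard → v = w

/-- A leaf: a vertex of degree 1. -/
def IsLeaf {W : Type} (T : SimpleGraph W) (v : W) : Prop := (T.neighborSet v).ncard = 1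

/-- `mf T`: the maximum over edges `e` of `T` of the minimum number of leaves of `T`
contained in a component of `T − e`. -/
noncomputable def mf {W : Type} (T : SimpleGraph W) : ℕ :=
  sSup {k : ℕ | ∃ u v : W, T.Adj u v ∧
    k = min {w : W | IsLeaf T w ∧ (T.deleteEdges {s(u, v)}).Reachable u w}.ncard
            {w : W | IsLeaf T w ∧ (T.deleteEdges {s(u, v)}).Reachable v w}.ncard}

/-- In `T` rooted at `r`, `v` is a child of `u`. -/
def IsChildIn {W : Type} (T : SimpleGraph W) (r u v : W) : Prop :=
  T.Adj u v ∧ ∀ p : T.Walk r v, p.IsPath → u ∈ p.support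

/-- In `T` rooted at `r`, `u` is childless. -/
def IsChildlessIn {W : Type} (T : SimpleGraph W) (r u : W) : Prop :=
  ¬ ∃ v : W, IsChildIn T r u v

namespace LCT

theorem chordless_aux {V : Type} {G : SimpleGraph V} {u v : V} (P : V → Prop) (p : G.Walk u v)
    (hP : ∀ x ∈ p.support, P x)
    (hmin : ∀ q : G.Walk u v, (∀ x ∈ q.support, P x) → p.length ≤ q.length)
    (i j : ℕ) (hij : i < j) (hj : j ≤ p.length) (hadj : G.Adj (p.getVert i) (p.getVert j)) :
    s(p.getVert i, p.getVert j) ∈ p.edges := by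
  by_cases h : j = i + 1
  · subst h
    rw [SimpleGraph.Walk.mk_mem_edges_iff_exists]
    exact ⟨i, by omega, rfl⟩
  · exfalso
    have := hmin ((p.take i).append (SimpleGraph.Walk.cons hadj (p.drop j))) ?_
    · simp only [SimpleGraph.Walk.length_append, SimpleGraph.Walk.length_cons,
        SimpleGraph.Walk.take_length, SimpleGraph.Walk.drop_length] at this
      omega
    · intro x hx
      rw [SimpleGraph.Walk.mem_support_append_iff] at hx
      rcases hx with hx | hx
      · exact hP x ((p.isSubwalk_take i).support_subset hx)
      · rw [SimpleGraph.Walk.support_cons, List.mem_cons] at hx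
        rcases hx with rfl | hx
        · exact hP _ (p.getVert_mem_support i)
        · exact hP x ((p.isSubwalk_drop j).support_subset hx)

theorem exists_induced_path {V : Type} {G : SimpleGraph V} {u v : V} (P : V → Prop)
    (h : ∃ p : G.Walk u v, ∀ x ∈ p.support, P x) :
    ∃ p : G.Walk u v, p.IsPath ∧ (∀ x ∈ p.support, P x) ∧
      ∀ x ∈ p.support, ∀ y ∈ p.support, G.Adj x y → s(x, y) ∈ p.edges := by
  classical
  obtain ⟨p, hp, hmin⟩ : ∃ p : G.Walk u v, (∀ x ∈ p.support, P x) ∧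
      ∀ q : G.Walk u v, (∀ x ∈ q.support, P x) → p.length ≤ q.length := by
    obtain ⟨p, hp⟩ := h
    have := WellFounded.has_min (measure (fun p : G.Walk u v => p.length)).wf
      {p | ∀ x ∈ p.support, P x} ⟨p, hp⟩
    obtain ⟨m, hm, hm2⟩ := this
    exact ⟨m, hm, fun q hq => not_lt.mp (hm2 q hq)⟩
  have hb : ∀ x ∈ p.bypass.support, P x := fun x hx => hp x (p.support_bypass_subset_support hx)
  have hbmin : ∀ q : G.Walk u v, (∀ x ∈ q.support, P x) → p.bypass.length ≤ q.length :=
    fun q hq => (p.length_bypass_le_length).trans (hmin q hq)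
  refine ⟨p.bypass, p.bypass_isPath, hb, ?_⟩
  intro x hx y hy hadj
  rw [SimpleGraph.Walk.mem_support_iff_exists_getVert] at hx hy
  obtain ⟨i, rfl, hi⟩ := hx
  obtain ⟨j, rfl, hj⟩ := hy
  rcases lt_trichotomy i j with hij | hij | hij
  · exact chordless_aux P _ hb hbmin i j hij hj hadj
  · subst hij; exact absurd hadj (G.loopless.irrefl _)
  · rw [Sym2.eq_swap]
    exact chordless_aux P _ hb hbmin j i hij hi hadj.symm

theorem chordal_sep {V : Type} {G : SimpleGraph V} (hch : IsChordal G) (A : Finset V)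
    (hconn : ∀ a ∈ A, ∀ b ∈ A, ∃ p : G.Walk a b, ∀ x ∈ p.support, x ∈ A)
    (u v b : V) (huv : u ≠ v) (hu : ∃ a ∈ A, G.Adj a u) (hv : ∃ a ∈ A, G.Adj a v)
    (huA : u ∉ A) (hvA : v ∉ A)
    (hbA : b ∉ A) (hb : ∀ a ∈ A, ¬ G.Adj a b) (hbu : G.Adj b u) (hbv : G.Adj b v) :
    G.Adj u v := by
  by_contra hnadj
  obtain ⟨a, ha, hau⟩ := hu
  obtain ⟨a', ha', hav⟩ := hv
  obtain ⟨p0, hp0⟩ := hconn a ha a' ha'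
  obtain ⟨p, hpath, hsup, hind⟩ := exists_induced_path (G := G) (u := u) (v := v)
    (fun x => x = u ∨ x = v ∨ x ∈ A)
    ⟨SimpleGraph.Walk.cons hau.symm (p0.append (SimpleGraph.Walk.cons hav .nil)), by
      intro x hx
      rw [SimpleGraph.Walk.support_cons, List.mem_cons,
        SimpleGraph.Walk.mem_support_append_iff] at hx
      rcases hx with h | h | h
      · exact Or.inl h
      · exact Or.inr (Or.inr (hp0 x h))
      · simp only [SimpleGraph.Walk.support_cons, SimpleGraph.Walk.support_nil, List.mem_cons,
          List.not_mem_nil, or_false] at h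
        rcases h with rfl | rfl
        · exact Or.inr (Or.inr ha')
        · exact Or.inr (Or.inl rfl)⟩
  have hbp : b ∉ p.support := by
    intro h
    rcases hsup b h with h | h | h
    · exact hbu.ne h
    · exact hbv.ne h
    · exact hbA h
  have hlen : 2 ≤ p.length := by
    by_contra hlt
    have h01 : p.length = 0 ∨ p.length = 1 := by omega
    rcases h01 with h | h
    · exact huv (SimpleGraph.Walk.eq_of_length_eq_zero h)
    · exact hnadj (SimpleGraph.Walk.adj_of_length_eq_one h)
  set c : G.Walk v v := SimpleGraph.Walk.cons hbv.symm (SimpleGraph.Walk.cons hbu p) with hc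
  have hcyc : c.IsCycle := by
    rw [hc, SimpleGraph.Walk.cons_isCycle_iff]
    refine ⟨by rw [SimpleGraph.Walk.cons_isPath_iff]; exact ⟨hpath, hbp⟩, ?_⟩
    rw [SimpleGraph.Walk.edges_cons, List.mem_cons]
    rintro (h | h)
    · rw [Sym2.eq_iff] at h
      rcases h with ⟨h1, h2⟩ | ⟨h1, h2⟩
      · exact hbv.ne h1.symm
      · exact huv h1.symm
    · exact hbp (p.snd_mem_support_of_mem_edges h)
  obtain ⟨x, y, hx, hy, hxy, hne⟩ := hch v c hcyc (by
    simp only [hc, SimpleGraph.Walk.length_cons]; omega)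
  have hmem : ∀ x ∈ c.support, x = b ∨ x ∈ p.support := by
    intro x hx
    simp only [hc, SimpleGraph.Walk.support_cons, List.mem_cons] at hx
    rcases hx with rfl | h | h
    · exact Or.inr p.end_mem_support
    · exact Or.inl h
    · exact Or.inr h
  have key : ∀ y ∈ p.support, G.Adj b y → s(b, y) ∈ c.edges := by
    intro y hy hby
    simp only [hc, SimpleGraph.Walk.edges_cons, List.mem_cons]
    rcases hsup y hy with rfl | rfl | h
    · exact Or.inr (Or.inl rfl)
    · exact Or.inl Sym2.eq_swap
    · exact absurd hby.symm (hb y h)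
  apply hne
  rcases hmem x hx with rfl | hx' <;> rcases hmem y hy with rfl | hy'
  · exact absurd hxy (G.loopless.irrefl _)
  · exact key y hy' hxy
  · rw [Sym2.eq_swap]; exact key x hx' hxy.symm
  · simp only [hc, SimpleGraph.Walk.edges_cons, List.mem_cons]
    exact Or.inr (Or.inr (hind x hx' y hy' hxy))

theorem exists_simplicial {V : Type} {G : SimpleGraph V} (hch : IsChordal G) :
    ∀ U : Finset V, U.Nonempty → ∃ s ∈ U, ∀ a ∈ U, ∀ b ∈ U, G.Adj s a → G.Adj s b → a ≠ b →
      G.Adj a b := by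
  classical
  intro U
  induction U using Finset.strongInduction with
  | H U ih =>
  intro hU
  by_cases hcomp : ∃ v ∈ U, ∃ w ∈ U, w ≠ v ∧ ¬ G.Adj v w
  swap
  · push Not at hcomp
    obtain ⟨s, hs⟩ := hU
    exact ⟨s, hs, fun a ha b hb _ _ hab => hcomp a ha b hb hab.symm⟩
  obtain ⟨v, hv, w, hw, hwv, hvw⟩ := hcomp
  let Good : Finset V → Prop := fun A =>
    (∀ a ∈ A, ∀ b ∈ A, ∃ p : G.Walk a b, ∀ x ∈ p.support, x ∈ A) ∧
      A.Nonempty ∧ ∃ b ∈ U, b ∉ A ∧ ∀ a ∈ A, ¬ G.Adj a b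
  have hne : (U.powerset.filter Good).Nonempty := by
    refine ⟨{v}, ?_⟩
    simp only [Finset.mem_filter, Finset.mem_powerset, Finset.singleton_subset_iff]
    refine ⟨hv, ?_, ⟨v, by simp⟩, w, hw, by simpa using hwv, by simpa using hvw⟩
    intro a ha b hb
    simp only [Finset.mem_singleton] at ha hb
    subst ha; subst hb
    exact ⟨.nil, by simp⟩
  obtain ⟨A, hA, hmax⟩ := Finset.exists_max_image _ Finset.card hne
  simp only [Finset.mem_filter, Finset.mem_powerset] at hA hmax
  obtain ⟨hAU, hconn, ⟨a0, ha0⟩, b0, hb0U, hb0A, hb0⟩ := hA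
  set B := U.filter (fun b => b ∉ A ∧ ∀ a ∈ A, ¬ G.Adj a b) with hB
  have hBU : B ⊂ U := by
    rw [Finset.ssubset_iff_of_subset (Finset.filter_subset _ _)]
    exact ⟨a0, hAU ha0, by simp [hB, ha0]⟩
  obtain ⟨s, hsB, hs⟩ := ih B hBU ⟨b0, by simp [hB, hb0U, hb0A]; exact hb0⟩
  have hsB' := hsB
  rw [hB, Finset.mem_filter] at hsB'
  obtain ⟨hsU, hsA, hsadj⟩ := hsB'
  -- boundary vertices are adjacent to everything in `B`
  have hfull : ∀ u ∈ U, u ∉ A → (∃ a ∈ A, G.Adj a u) → ∀ b ∈ B, G.Adj u b := by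
    rintro u hu huA ⟨a, ha, hau⟩ b hb
    by_contra hub
    rw [hB, Finset.mem_filter] at hb
    obtain ⟨hbU, hbA, hbadj⟩ := hb
    have hbu : b ≠ u := by
      rintro rfl
      exact hbadj a ha hau
    have := hmax (insert u A) ⟨Finset.insert_subset hu hAU, ?_, ⟨u, by simp⟩, b, hbU, ?_, ?_⟩
    · rw [Finset.card_insert_of_notMem huA] at this
      omega
    · have h1 : ∀ c ∈ A, ∃ p : G.Walk u c, ∀ x ∈ p.support, x ∈ insert u A := by
        intro c hc
        obtain ⟨p, hp⟩ := hconn a ha c hc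
        refine ⟨.cons hau.symm p, ?_⟩
        intro x hx
        rw [SimpleGraph.Walk.support_cons, List.mem_cons] at hx
        rcases hx with rfl | hx
        · simp
        · exact Finset.mem_insert_of_mem (hp x hx)
      intro c hc d hd
      rw [Finset.mem_insert] at hc hd
      rcases hc with rfl | hc <;> rcases hd with rfl | hd
      · exact ⟨.nil, by simp⟩
      · exact h1 d hd
      · obtain ⟨p, hp⟩ := h1 c hc
        exact ⟨p.reverse, by simpa using hp⟩
      · obtain ⟨p, hp⟩ := hconn c hc d hd
        exact ⟨p, fun x hx => Finset.mem_insert_of_mem (hp x hx)⟩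
    · simp [hbu, hbA]
    · intro c hc
      rw [Finset.mem_insert] at hc
      rcases hc with rfl | hc
      · exact hub
      · exact hbadj c hc
  refine ⟨s, hsU, ?_⟩
  have hcase : ∀ a ∈ U, G.Adj s a → a ∈ B ∨ (a ∉ A ∧ ∃ a' ∈ A, G.Adj a' a) := by
    intro a ha hsa
    have haA : a ∉ A := fun h => hsadj a h hsa.symm
    by_cases h : ∃ a' ∈ A, G.Adj a' a
    · exact Or.inr ⟨haA, h⟩
    · push Not at h
      left; rw [hB, Finset.mem_filter]; exact ⟨ha, haA, h⟩
  intro a ha b hb hsa hsb hab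
  rcases hcase a ha hsa with h1 | ⟨h1, h1'⟩ <;> rcases hcase b hb hsb with h2 | ⟨h2, h2'⟩
  · exact hs a h1 b h2 hsa hsb hab
  · exact (hfull b hb h2 h2' a h1).symm
  · exact hfull a ha h1 h1' b h2
  · exact chordal_sep hch A hconn a b s hab h1' h2' h1 h2 hsA hsadj hsa hsb

theorem exists_elim {V : Type} {G : SimpleGraph V} (hch : IsChordal G) :
    ∀ U : Finset V, ∃ f : V → ℕ, Set.InjOn f U ∧
      ∀ v ∈ U, ∀ a ∈ U, ∀ b ∈ U, G.Adj v a → G.Adj v b → f v < f a → f v < f b → a ≠ b →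
        G.Adj a b := by
  classical
  intro U
  induction U using Finset.strongInduction with
  | H U ih =>
  by_cases hU : U.Nonempty
  swap
  · rw [Finset.not_nonempty_iff_eq_empty] at hU
    subst hU
    exact ⟨fun _ => 0, by simp, by simp⟩
  obtain ⟨s, hs, hsimp⟩ := exists_simplicial hch U hU
  obtain ⟨f, hf, hf2⟩ := ih (U.erase s) (Finset.erase_ssubset hs)
  refine ⟨fun v => if v = s then 0 else f v + 1, ?_, ?_⟩
  · intro a ha b hb hab
    by_cases h1 : a = s <;> by_cases h2 : b = s <;> simp [h1, h2] at hab
    · rw [h1, h2]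
    · exact hf (by simpa [h1] using ha) (by simpa [h2] using hb) hab
  · intro v hv a ha b hb hva hvb h1 h2 hab
    by_cases hvs : v = s
    · subst hvs; exact hsimp a ha b hb hva hvb hab
    · have has : a ≠ s := by rintro rfl; simp at h1
      have hbs : b ≠ s := by rintro rfl; simp at h2
      simp [hvs, has, hbs] at h1 h2
      exact hf2 v (by simp [hvs, hv]) a (by simp [has, ha]) b (by simp [hbs, hb]) hva hvb h1 h2 hab

end LCT

namespace LCT

/-- A path, as a list of vertices. -/
def Pth {V : Type} (G : SimpleGraph V) (l : List V) : Prop := l.Nodup ∧ l.IsChain G.Adj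

/-- A cycle, as a list of vertices. -/
def Cy {V : Type} (G : SimpleGraph V) (l : List V) : Prop :=
  l.Nodup ∧ 3 ≤ l.length ∧ l.IsChain G.Adj ∧ ∀ a ∈ l.getLast?, ∀ b ∈ l.head?, G.Adj a b

/-- A longest cycle, as a list of vertices. -/
def LC {V : Type} (G : SimpleGraph V) (l : List V) : Prop :=
  Cy G l ∧ ∀ l', Cy G l' → l'.length ≤ l.length

theorem Cy.rot {V : Type} {G : SimpleGraph V} {a b : List V} (h : Cy G (a ++ b)) :
    Cy G (b ++ a) := by
  rcases a.eq_nil_or_concat with rfl | ⟨a', x, rfl⟩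
  · simpa using h
  cases b with
  | nil => simpa using h
  | cons y b =>
  obtain ⟨h1, h2, h3, h4⟩ := h
  refine ⟨?_, ?_, ?_, ?_⟩
  · exact List.nodup_append_comm.mp h1
  · simp at h2 ⊢; omega
  · rw [List.isChain_append] at h3 ⊢
    refine ⟨h3.2.1, h3.1, ?_⟩
    intro p hp q hq
    apply h4
    · rw [List.getLast?_append]; simp at hp ⊢; simp [hp]
    · rw [List.head?_append]; simp at hq ⊢; cases a' <;> simp_all
  · rw [List.isChain_append] at h3
    intro p hp q hq
    apply h3.2.2
    · rw [List.getLast?_append] at hp; simpa using hp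
    · simp at hq ⊢; exact hq

theorem Cy.rev {V : Type} {G : SimpleGraph V} {a : List V} (h : Cy G a) :
    Cy G a.reverse := by
  obtain ⟨h1, h2, h3, h4⟩ := h
  refine ⟨by simpa using h1, by simpa using h2, ?_, ?_⟩
  · rw [List.isChain_reverse]
    exact h3.imp (fun _ _ h => h.symm)
  · intro p hp q hq
    simp at hp hq
    exact (h4 q hq p hp).symm

theorem Pth.rev {V : Type} {G : SimpleGraph V} {a : List V} (h : Pth G a) :
    Pth G a.reverse := by
  obtain ⟨h1, h3⟩ := h
  refine ⟨by simpa using h1, ?_⟩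
  rw [List.isChain_reverse]
  exact h3.imp (fun _ _ h => h.symm)

theorem LC.perm {V : Type} {G : SimpleGraph V} {a b : List V} (h : LC G a) (hb : Cy G b)
    (hp : b.Perm a) : LC G b :=
  ⟨hb, fun l' hl' => by rw [hp.length_eq]; exact h.2 l' hl'⟩

theorem Cy.ofWalk {V : Type} {G : SimpleGraph V} {v : V} {c : G.Walk v v} (h : c.IsCycle) :
    Cy G c.support.tail ∧ c.support.tail.length = c.length ∧
      ∀ a ∈ c.support.tail, a ∈ c.support := by
  have hlen : c.support.tail.length = c.length := by simp
  refine ⟨⟨h.support_nodup, ?_, ?_, ?_⟩, hlen, fun a ha => List.mem_of_mem_tail ha⟩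
  · rw [hlen]; exact h.three_le_length
  · exact c.isChain_adj_support.tail
  · intro a ha b hb
    cases c with
    | nil => simp at ha
    | @cons _ w _ hadj p =>
      simp only [SimpleGraph.Walk.support_cons, List.tail_cons] at ha hb
      have e1 : a = v := by
        rw [List.getLast?_eq_some_getLast (by simp)] at ha
        simpa using ha.symm
      have e2 : b = w := by
        rw [List.head?_eq_some_head (by simp)] at hb
        simpa using hb.symm
      subst e1; subst e2; exact hadj

theorem chain_walk {V : Type} {G : SimpleGraph V} : ∀ (t : List V) (u : V),
    (u :: t).IsChain G.Adj → ∃ v, ∃ p : G.Walk u v, p.support = u :: t ∧ v ∈ (u :: t).getLast? := by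
  intro t
  induction t with
  | nil => intro u _; exact ⟨u, SimpleGraph.Walk.nil, by simp, by simp⟩
  | cons w t ih =>
    intro u h
    rw [List.isChain_cons_cons] at h
    obtain ⟨v, p, hp, hv⟩ := ih w h.2
    exact ⟨v, SimpleGraph.Walk.cons h.1 p, by simp [hp], by simpa using hv⟩

theorem Cy.toWalk {V : Type} {G : SimpleGraph V} {l : List V} (h : Cy G l) :
    ∃ v, ∃ c : G.Walk v v, c.IsCycle ∧ c.length = l.length := by
  obtain ⟨h1, h2, h3, h4⟩ := h
  cases l with
  | nil => simp at h2
  | cons u t =>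
    obtain ⟨v, p, hp, hv⟩ := chain_walk t u h3
    have hadj := h4 v hv u (by simp)
    have hpath : p.IsPath := by rw [SimpleGraph.Walk.isPath_def, hp]; exact h1
    have hlen : p.length + 1 = t.length + 1 := by
      rw [← SimpleGraph.Walk.length_support, hp]; simp
    refine ⟨v, SimpleGraph.Walk.cons hadj p, ?_, by simp; omega⟩
    rw [SimpleGraph.Walk.cons_isCycle_iff]
    refine ⟨hpath, ?_⟩
    intro he
    simp at h2
    rw [SimpleGraph.Walk.mk_mem_edges_iff_exists] at he
    obtain ⟨i, hi, he⟩ := he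
    have hinj := hpath.getVert_injOn
    have e0 : p.getVert 0 = u := by simp
    have e1 : p.getVert p.length = v := by simp
    rw [Sym2.eq_iff] at he
    rcases he with ⟨ha, hb⟩ | ⟨ha, hb⟩
    · have := hinj (by simp; omega) (by simp) (hb.trans e0.symm)
      omega
    · have i0 := hinj (by simp; omega) (by simp) (ha.trans e0.symm)
      have i1 := hinj (by simp; omega) (by simp) (hb.trans e1.symm)
      omega

theorem exists_rot_head {V : Type} {G : SimpleGraph V} {l : List V} (h : Cy G l) {u : V}
    (hu : u ∈ l) : ∃ t, Cy G (u :: t) ∧ (u :: t).Perm l := by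
  obtain ⟨a, b, rfl⟩ := List.append_of_mem hu
  exact ⟨b ++ a, h.rot, (List.perm_append_comm (l₁ := u :: b) (l₂ := a))⟩

theorem cross {V : Type} {G : SimpleGraph V} {l : List V} (h : Cy G l) (P : V → Prop)
    (hw : ∃ w ∈ l, P w) (hu : ∃ u ∈ l, ¬ P u) :
    ∃ l', Cy G l' ∧ l'.Perm l ∧ (∀ a ∈ l'.head?, P a) ∧ (∀ a ∈ l'.getLast?, ¬ P a) := by
  classical
  obtain ⟨u, hu, hPu⟩ := hu
  obtain ⟨t, ht, hp⟩ := exists_rot_head h hu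
  obtain ⟨w, hw, hPw⟩ := hw
  have hwt : w ∈ t := by
    have := hp.mem_iff.mpr hw
    rcases List.mem_cons.mp this with rfl | h
    · exact absurd hPw hPu
    · exact h
  have e := List.takeWhile_append_dropWhile (p := fun a => decide (¬ P a)) (l := t)
  set A := t.takeWhile (fun a => decide (¬ P a)) with hA
  set B := t.dropWhile (fun a => decide (¬ P a)) with hB
  have hAP : ∀ a ∈ A, ¬ P a := by
    intro a ha
    simpa using List.mem_takeWhile_imp ha
  have hne : B ≠ [] := by
    intro hB'
    rw [hB', List.append_nil] at e
    exact hAP w (e ▸ hwt) hPw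
  refine ⟨B ++ (u :: A), ?_, ?_, ?_, ?_⟩
  · apply Cy.rot; rw [List.cons_append, e]; exact ht
  · refine List.Perm.trans List.perm_append_comm ?_
    rw [List.cons_append, e]; exact hp
  · intro a ha
    rw [List.head?_append_of_ne_nil _ hne, List.head?_eq_some_head hne] at ha
    have := List.head_dropWhile_not (fun a => decide (¬ P a)) (l := t) hne
    simp only [Option.mem_def, Option.some.injEq] at ha
    rw [← ha]; simpa only [decide_eq_false_iff_not, not_not] using this
  · intro a ha
    have : a ∈ u :: A := by
      have := List.mem_of_getLast? (l := u :: A) (a := a) (by rw [List.getLast?_append] at ha; simpa using ha)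
      exact this
    rcases List.mem_cons.mp this with rfl | h
    · exact hPu
    · exact hAP a h

theorem seg {V : Type} {G : SimpleGraph V} {l : List V} (h : Cy G l) (P : V → Prop)
    (hw : ∃ w ∈ l, P w) (hu : ∃ u ∈ l, ¬ P u) :
    ∃ o I, Cy G (o ++ I) ∧ (o ++ I).Perm l ∧ o ≠ [] ∧ I ≠ [] ∧ (∀ a ∈ I, P a) ∧
      (∀ a ∈ o.head?, ¬ P a) ∧ (∀ a ∈ o.getLast?, ¬ P a) := by
  classical
  obtain ⟨l', hl', hp, hh, hlast⟩ := cross h P hw hu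
  have e := List.takeWhile_append_dropWhile (p := fun a => decide (P a)) (l := l')
  set A := l'.takeWhile (fun a => decide (P a)) with hA
  set B := l'.dropWhile (fun a => decide (P a)) with hB
  have hAP : ∀ a ∈ A, P a := by
    intro a ha
    simpa using List.mem_takeWhile_imp ha
  have hne : B ≠ [] := by
    intro hB'
    rw [hB', List.append_nil] at e
    obtain ⟨u, hu, hPu⟩ := hu
    exact hPu (hAP u (e ▸ hp.mem_iff.mpr hu))
  have hAne : A ≠ [] := by
    cases hl : l' with
    | nil => rw [hl] at hl'; simpa using hl'.2.1
    | cons a s =>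
      have : P a := hh a (by simp [hl])
      rw [hA, hl, List.takeWhile_cons]
      simp [this]
  refine ⟨B, A, ?_, ?_, hne, hAne, hAP, ?_, ?_⟩
  · apply Cy.rot; rw [e]; exact hl'
  · refine List.Perm.trans List.perm_append_comm ?_
    rw [e]; exact hp
  · intro a ha
    rw [List.head?_eq_some_head hne] at ha
    have := List.head_dropWhile_not (fun a => decide (P a)) (l := l') hne
    simp at ha this
    rw [← ha]; exact this
  · intro a ha
    apply hlast a
    rw [← e, List.getLast?_append]
    simp at ha
    simp [ha]

theorem insert_false {V : Type} {G : SimpleGraph V} {l : List V} (h : LC G l) {a : V}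
    (ha : a ∉ l) (h1 : ∀ x ∈ l.head?, G.Adj x a) (h2 : ∀ x ∈ l.getLast?, G.Adj x a) : False := by
  obtain ⟨⟨n1, n2, n3, n4⟩, hm⟩ := h
  have := hm (a :: l) ⟨by simp [ha, n1], by simp; omega, ?_, ?_⟩
  · simp at this
  · rw [List.isChain_cons]
    exact ⟨fun y hy => (h1 y hy).symm, n3⟩
  · intro x hx y hy
    simp at hy; subst hy
    apply h2
    cases l with
    | nil => simp at n2
    | cons b t => simpa using hx

theorem arc {V : Type} {G : SimpleGraph V} {l : List V} (h : Cy G l) {a b : V} (ha : a ∈ l)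
    (hb : b ∈ l) (hab : a ≠ b) :
    ∃ x, Pth G (a :: (x ++ [b])) ∧ (∀ y ∈ x, y ∈ l) ∧ l.length ≤ 2 * x.length + 2 := by
  obtain ⟨t, ht, hp⟩ := exists_rot_head h ha
  have hbt : b ∈ t := by
    have := hp.mem_iff.mpr hb
    rcases List.mem_cons.mp this with rfl | h
    · exact absurd rfl hab
    · exact h
  obtain ⟨s, r, rfl⟩ := List.append_of_mem hbt
  have hlen := hp.length_eq
  simp at hlen
  have hmem : ∀ y, y ∈ a :: (s ++ b :: r) → y ∈ l := fun y hy => hp.mem_iff.mp hy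
  by_cases hc : r.length ≤ s.length
  · refine ⟨s, ⟨?_, ?_⟩, fun y hy => hmem y (by simp [hy]), by omega⟩
    · have := ht.1
      have e : a :: (s ++ b :: r) = (a :: (s ++ [b])) ++ r := by simp
      rw [e] at this
      exact (List.nodup_append.mp this).1
    · have := ht.2.2.1
      have e : a :: (s ++ b :: r) = (a :: (s ++ [b])) ++ r := by simp
      rw [e] at this
      exact (List.isChain_append.mp this).1
  · have ht2 : Cy G (((b :: r) ++ [a]) ++ s) := by
      have e : a :: (s ++ b :: r) = (a :: s) ++ (b :: r) := by simp
      rw [e] at ht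
      have := ht.rot
      simpa using this
    have hP : Pth G ((b :: r) ++ [a]) :=
      ⟨(List.nodup_append.mp ht2.1).1, (List.isChain_append.mp ht2.2.2.1).1⟩
    refine ⟨r.reverse, ?_, fun y hy => hmem y (by simp at hy; simp [hy]), by simp; omega⟩
    have := hP.rev
    simpa using this

/-- A nonempty path from `S` to `B`. -/
def Lnk {V : Type} (G : SimpleGraph V) (S B : V → Prop) (l : List V) : Prop :=
  l ≠ [] ∧ Pth G l ∧ (∀ a ∈ l.head?, S a) ∧ (∀ a ∈ l.getLast?, B a)

theorem Lnk.rev {V : Type} {G : SimpleGraph V} {S B : V → Prop} {l : List V}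
    (h : Lnk G S B l) : Lnk G B S l.reverse := by
  obtain ⟨h1, h2, h3, h4⟩ := h
  exact ⟨by simpa using h1, h2.rev, by simpa using h4, by simpa using h3⟩

theorem Pth.mid {V : Type} {G : SimpleGraph V} {a b c : List V} (h : Pth G (a ++ b ++ c)) :
    Pth G b := by
  obtain ⟨h1, h2⟩ := h
  exact ⟨(List.nodup_append.mp (List.nodup_append.mp h1).1).2.1,
    (List.isChain_append.mp (List.isChain_append.mp h2).1).2.1⟩

theorem trim {V : Type} {G : SimpleGraph V} {S B : V → Prop} :
    ∀ (n : ℕ) (l : List V), l.length ≤ n → Lnk G S B l →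
    ∃ l', Lnk G S B l' ∧ (∀ a ∈ l', a ∈ l) ∧ (∀ a ∈ l'.tail, ¬ S a) ∧
      (∀ a ∈ l'.dropLast, ¬ B a) := by
  intro n
  induction n with
  | zero => intro l hl h; exact absurd (by simpa using hl) h.1
  | succ n ih =>
    intro l hl h
    by_cases hS : ∃ a ∈ l.tail, S a
    · obtain ⟨a, ha, hSa⟩ := hS
      cases l with
      | nil => simp at ha
      | cons u t =>
        simp only [List.tail_cons] at ha
        obtain ⟨s, r, rfl⟩ := List.append_of_mem ha
        obtain ⟨l', h1, h2, h3⟩ := ih (a :: r) (by simp at hl ⊢; omega)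
          ⟨by simp, Pth.mid (a := u :: s) (c := []) (by simpa using h.2.1), by simpa using hSa, by
            intro b hb
            apply h.2.2.2
            rw [← List.cons_append, List.getLast?_append]; simp at hb; simp [hb]⟩
        exact ⟨l', h1, fun b hb => by have := h2 b hb; simp at this ⊢; tauto, h3⟩
    by_cases hB : ∃ a ∈ l.dropLast, B a
    · obtain ⟨a, ha, hBa⟩ := hB
      rcases l.eq_nil_or_concat with rfl | ⟨t, u, rfl⟩
      · simp at ha
      · simp only [List.concat_eq_append, List.dropLast_concat] at *
        obtain ⟨s, r, rfl⟩ := List.append_of_mem ha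
        obtain ⟨l', h1, h2, h3⟩ := ih (s ++ [a]) (by simp at hl ⊢; omega)
          ⟨by simp, Pth.mid (a := []) (c := r ++ [u]) (by simpa using h.2.1), by
            intro b hb
            apply h.2.2.1
            cases s <;> simpa using hb, by simpa using hBa⟩
        exact ⟨l', h1, fun b hb => by have := h2 b hb; simp at this ⊢; tauto, h3⟩
    push Not at hS hB
    exact ⟨l, h, fun a ha => ha, hS, hB⟩

theorem merge {V : Type} {G : SimpleGraph V} {C C0 P1 P2 : List V} (hC : Cy G C) (hC0 : Cy G C0)
    (hlen : C.length = C0.length)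
    (h1 : Lnk G (· ∈ C0) (· ∈ C) P1) (h2 : Lnk G (· ∈ C0) (· ∈ C) P2)
    (t1 : ∀ a ∈ P1.tail, a ∉ C0) (t2 : ∀ a ∈ P2.tail, a ∉ C0)
    (d1 : ∀ a ∈ P1.dropLast, a ∉ C) (d2 : ∀ a ∈ P2.dropLast, a ∉ C)
    (hd : ∀ a ∈ P1, a ∉ P2) (hm : ∀ a ∈ C, a ∈ C0 → a ∈ P1) :
    ∃ l, Cy G l ∧ C.length < l.length := by
  obtain ⟨n1, p1, s1, b1⟩ := h1
  obtain ⟨n2, p2, s2, b2⟩ := h2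
  have x1 : P1.head n1 ∈ C0 := s1 _ (by rw [List.head?_eq_some_head n1]; simp)
  have x2 : P2.head n2 ∈ C0 := s2 _ (by rw [List.head?_eq_some_head n2]; simp)
  have y1 : P1.getLast n1 ∈ C := b1 _ (by rw [List.getLast?_eq_some_getLast n1]; simp)
  have y2 : P2.getLast n2 ∈ C := b2 _ (by rw [List.getLast?_eq_some_getLast n2]; simp)
  have hx : P2.head n2 ≠ P1.head n1 := by
    intro e; exact hd _ (List.head_mem n1) (e ▸ List.head_mem n2)
  have hy : P1.getLast n1 ≠ P2.getLast n2 := by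
    intro e; exact hd _ (List.getLast_mem n1) (e ▸ List.getLast_mem n2)
  obtain ⟨x, hxP, hxC, hxl⟩ := arc hC y1 y2 hy
  obtain ⟨y, hyP, hyC, hyl⟩ := arc hC0 x2 x1 hx
  have hP2 : 2 ≤ P2.length := by
    by_contra hlt
    have : P2.length ≠ 0 := by simpa using n2
    have : P2.length = 1 := by omega
    obtain ⟨a, rfl⟩ := List.length_eq_one_iff.mp this
    simp at x2 y2
    exact hd a (hm a y2 x2) (by simp)
  have hP1 : 1 ≤ P1.length := List.length_pos_iff.mpr n1
  have q1 : ∀ a ∈ P1, a ∈ C → a = P1.getLast n1 := by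
    intro a ha haC
    rw [← List.dropLast_append_getLast n1] at ha
    rcases List.mem_append.mp ha with h | h
    · exact absurd haC (d1 a h)
    · simpa using h
  have q2 : ∀ a ∈ P2, a ∈ C → a = P2.getLast n2 := by
    intro a ha haC
    rw [← List.dropLast_append_getLast n2] at ha
    rcases List.mem_append.mp ha with h | h
    · exact absurd haC (d2 a h)
    · simpa using h
  have r1 : ∀ a ∈ P1, a ∈ C0 → a = P1.head n1 := by
    intro a ha haC
    rw [← List.cons_head_tail n1] at ha
    rcases List.mem_cons.mp ha with h | h
    · exact h
    · exact absurd haC (t1 a h)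
  have r2 : ∀ a ∈ P2, a ∈ C0 → a = P2.head n2 := by
    intro a ha haC
    rw [← List.cons_head_tail n2] at ha
    rcases List.mem_cons.mp ha with h | h
    · exact h
    · exact absurd haC (t2 a h)
  have hxn := hxP.1
  have hyn := hyP.1
  simp only [List.nodup_cons, List.mem_append, List.mem_singleton, not_or, List.nodup_append] at hxn hyn
  refine ⟨P1 ++ x ++ P2.reverse ++ y, ⟨?_, ?_, ?_, ?_⟩, ?_⟩
  · have hd2 : ∀ a ∈ P2, a ∉ P1 := fun a h h' => hd a h' h
    have := p1.1
    have := p2.1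
    have hxy : ∀ a ∈ x, a ∉ y := by
      intro a ha hay
      have := q1 a (hm a (hxC a ha) (hyC a hay)) (hxC a ha)
      exact hxn.1.1 (this ▸ ha)
    simp only [List.nodup_append, List.mem_append, List.nodup_reverse, List.mem_reverse]
    grind
  · simp; omega
  · have c1 := hxP.2
    have c2 := hyP.2
    rw [List.isChain_cons, List.isChain_append] at c1 c2
    have e1 := List.getLast?_eq_some_getLast n1
    have e2 := List.getLast?_eq_some_getLast n2
    have e3 := List.head?_eq_some_head n2
    have k1 := p1.2
    have k2 := p2.rev.2
    rw [List.isChain_append, List.isChain_append, List.isChain_append]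
    refine ⟨⟨⟨k1, c1.2.1, ?_⟩, k2, ?_⟩, c2.2.1, ?_⟩
    · intro a ha b hb
      rw [e1] at ha; simp at ha; subst ha
      apply c1.1
      rw [List.head?_append]; simp at hb; simp [hb]
    · intro a ha b hb
      rw [List.head?_reverse, e2] at hb; simp at hb; subst hb
      by_cases hx0 : x = []
      · subst hx0
        simp [e1] at ha; subst ha
        exact c1.1 _ (by simp)
      · apply c1.2.2.2 a _ _ (by simp)
        rw [List.getLast?_append, List.getLast?_eq_some_getLast hx0] at ha
        rw [List.getLast?_eq_some_getLast hx0]; simpa using ha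
    · intro a ha b hb
      rw [List.getLast?_append, List.getLast?_reverse, e3] at ha
      simp at ha; subst ha
      apply c2.1
      rw [List.head?_append]; simp at hb; simp [hb]
  · intro a ha b hb
    have c2 := hyP.2
    rw [List.isChain_cons, List.isChain_append] at c2
    have e3 := List.head?_eq_some_head n2
    have e4 := List.head?_eq_some_head n1
    have : b = P1.head n1 := by
      rw [List.append_assoc, List.append_assoc, List.head?_append, e4] at hb
      simpa using hb.symm
    subst this
    by_cases hy0 : y = []
    · subst hy0
      rw [List.append_nil, List.getLast?_append, List.getLast?_reverse, e3] at ha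
      simp at ha; subst ha
      exact c2.1 _ (by simp)
    · apply c2.2.2.2 a _ _ (by simp)
      rw [List.getLast?_append, List.getLast?_eq_some_getLast hy0] at ha
      rw [List.getLast?_eq_some_getLast hy0]; simpa using ha
  · simp; omega

end LCT

namespace LCT

open Relation

/-- Higher neighbours. -/
def Up {V : Type} (G : SimpleGraph V) (f : V → ℕ) (v u : V) : Prop := G.Adj v u ∧ f v < f u

/-- `u` is the parent of `v` in the elimination tree. -/
def Par {V : Type} (G : SimpleGraph V) (f : V → ℕ) (v u : V) : Prop :=
  Up G f v u ∧ ∀ w, Up G f v w → f u ≤ f w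

/-- `w` is a descendant of `x`. -/
def D {V : Type} (G : SimpleGraph V) (f : V → ℕ) (x w : V) : Prop :=
  ReflTransGen (Par G f) w x

/-- The bag of `q`. -/
def Bag {V : Type} (G : SimpleGraph V) (f : V → ℕ) (q a : V) : Prop := a = q ∨ Up G f q a

/-- `f` is a perfect elimination order. -/
structure Elim {V : Type} (G : SimpleGraph V) (f : V → ℕ) : Prop where
  inj : Function.Injective f
  cl : ∀ v a b, Up G f v a → Up G f v b → a ≠ b → G.Adj a b

section
variable {V : Type} {G : SimpleGraph V} {f : V → ℕ}

theorem exists_par {v u : V} (h : Up G f v u) : ∃ p, Par G f v p := by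
  classical
  have hex : ∃ n, ∃ u, Up G f v u ∧ f u = n := ⟨_, u, h, rfl⟩
  obtain ⟨p, hp, e⟩ := Nat.find_spec hex
  refine ⟨p, hp, fun w hw => ?_⟩
  rw [e]
  exact Nat.find_min' hex ⟨w, hw, rfl⟩

theorem Par.lt {v u : V} (h : Par G f v u) : f v < f u := h.1.2

theorem Par.unique (hE : Elim G f) : Relator.RightUnique (Par G f) := by
  intro a b c hb hc
  exact hE.inj (le_antisymm (hb.2 c hc.1) (hc.2 b hb.1))

theorem up_par (hE : Elim G f) {v u p : V} (hp : Par G f v p) (h : Up G f v u) :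
    Bag G f p u := by
  by_cases e : u = p
  · exact Or.inl e
  · refine Or.inr ⟨hE.cl v p u hp.1 h (Ne.symm e), ?_⟩
    exact lt_of_le_of_ne (hp.2 u h) (fun h' => e (hE.inj h').symm)

theorem D.refl (x : V) : D G f x x := ReflTransGen.refl

theorem D.trans {x y z : V} (h1 : D G f x y) (h2 : D G f y z) : D G f x z :=
  ReflTransGen.trans h2 h1

theorem D.le {x w : V} (h : D G f x w) : f w ≤ f x := by
  induction h with
  | refl => exact le_rfl
  | tail _ h ih => exact ih.trans h.lt.le

theorem D_up (hE : Elim G f) {x w u : V} (h : D G f x w) (hu : Up G f w u) :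
    D G f x u ∨ Up G f x u := by
  induction h using ReflTransGen.head_induction_on with
  | refl => exact Or.inr hu
  | head h1 h2 ih =>
    rcases up_par hE h1 hu with rfl | h
    · exact Or.inl h2
    · exact ih h

theorem D_of_up (hE : Elim G f) {u w : V} (h : Up G f u w) : D G f w u := by
  have : ∀ n u, f w - f u ≤ n → Up G f u w → D G f w u := by
    intro n
    induction n with
    | zero => intro u hn h; have := h.2; omega
    | succ n ih =>
      intro u hn h
      obtain ⟨p, hp⟩ := exists_par h
      rcases up_par hE hp h with rfl | h'
      · exact ReflTransGen.single hp
      · have := hp.lt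
        have := h'.2
        exact (ih p (by omega) h').head hp
  exact this _ u le_rfl h

theorem D_adj (hE : Elim G f) {x w u : V} (ha : G.Adj u w) (hw : D G f x w) (hu : ¬ D G f x u) :
    Up G f x u := by
  have hne : f u ≠ f w := fun h => ha.ne (hE.inj h)
  rcases lt_or_gt_of_ne hne with h | h
  · exact absurd (hw.trans (D_of_up hE ⟨ha, h⟩)) hu
  · exact (D_up hE hw ⟨ha.symm, h⟩).resolve_left hu

theorem D_child {x w : V} (h : D G f x w) (hne : w ≠ x) : ∃ z, Par G f z x ∧ D G f z w := by
  rcases ReflTransGen.cases_tail h with e | ⟨z, h1, h2⟩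
  · exact absurd e.symm hne
  · exact ⟨z, h2, h1⟩

theorem D_total (hE : Elim G f) {z z' w : V} (h : D G f z w) (h' : D G f z' w) :
    D G f z z' ∨ D G f z' z := by
  rcases ReflTransGen.total_of_right_unique (Par.unique hE) h h' with h | h
  · exact Or.inr h
  · exact Or.inl h

theorem D_par (hE : Elim G f) {z x y : V} (h : Par G f z x) (hD : D G f y z) (hne : z ≠ y) :
    D G f y x := by
  rcases ReflTransGen.cases_head hD with e | ⟨c, h1, h2⟩
  · exact absurd e hne
  · rw [Par.unique hE h h1]; exact h2

theorem child_disj (hE : Elim G f) {z z' x w : V} (h : Par G f z x) (h' : Par G f z' x)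
    (hw : D G f z w) (hw' : D G f z' w) : z = z' := by
  by_contra hne
  rcases D_total hE hw hw' with hd | hd
  · have := (D_par hE h' hd (Ne.symm hne)).le
    have := h.lt; omega
  · have := (D_par hE h hd hne).le
    have := h'.lt; omega

theorem bag_adj (hE : Elim G f) {q a b : V} (ha : Bag G f q a) (hb : Bag G f q b) (hne : a ≠ b) :
    G.Adj a b := by
  rcases ha with rfl | ha <;> rcases hb with rfl | hb
  · exact absurd rfl hne
  · exact hb.1
  · exact ha.1.symm
  · exact hE.cl q a b ha hb hne

theorem bag_le {q a : V} (ha : Bag G f q a) : f q ≤ f a := by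
  rcases ha with rfl | ha
  · exact le_rfl
  · exact ha.2.le

/-- contiguity of bags along ancestor chains -/
theorem bag_between (hE : Elim G f) {q q' q0 a : V} (h1 : Bag G f q' a) (h0 : f q0 ≤ f a)
    (hq : D G f q q') (hle : f q ≤ f q0) : Bag G f q a := by
  rcases h1 with rfl | h1
  · have : f a = f q := le_antisymm hq.le (hle.trans h0)
    exact Or.inl (hE.inj this)
  · rcases D_up hE hq h1 with h | h
    · have : f a = f q := le_antisymm h.le (hle.trans h0)
      exact Or.inl (hE.inj this)
    · exact Or.inr h

theorem cross_conn {u v w : V} (hc : (G.induce {u}ᶜ).Connected) (P : V → Prop) (hv : v ≠ u)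
    (hw : w ≠ u) (hPv : P v) (hPw : ¬ P w) : ∃ a b, b ≠ u ∧ G.Adj a b ∧ P a ∧ ¬ P b := by
  obtain ⟨p⟩ := hc.preconnected ⟨v, hv⟩ ⟨w, hw⟩
  by_contra hcon
  push Not at hcon
  have : ∀ (a b : ↥({u}ᶜ : Set V)), (G.induce {u}ᶜ).Walk a b → P a → P b := by
    intro a b p
    induction p with
    | nil => exact id
    | @cons x y z h p ih =>
      intro hP
      exact ih (hcon _ _ y.2 (by simpa using h) hP)
  exact hPw (this _ _ p hPv)

theorem two_conn (h2 : TwoConnected G) (hE : Elim G f) {u v w : V} (hN : ∀ y, Up G f v y → y = u)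
    (hvu : v ≠ u) (hwu : w ≠ u) (hvw : f v < f w) : False := by
  obtain ⟨a, b, hb, hab, ha, hb'⟩ := cross_conn (h2.2 u) (D G f v) hvu hwu (D.refl v)
    (fun h => by have := h.le; omega)
  exact hb (hN b (D_adj hE hab.symm ha hb'))

theorem reach_link {s : Set V} {a b : V} (ha : a ∈ s) (hb : b ∈ s)
    (h : (G.induce s).Reachable ⟨a, ha⟩ ⟨b, hb⟩) :
    ∃ l, Lnk G (· = a) (· = b) l ∧ ∀ y ∈ l, y ∈ s := by
  obtain ⟨p, hp⟩ := h.exists_isPath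
  refine ⟨p.support.map Subtype.val,
    ⟨fun h0 => p.support_ne_nil (List.map_eq_nil_iff.mp h0), ⟨?_, ?_⟩, ?_, ?_⟩, ?_⟩
  · exact hp.support_nodup.map Subtype.val_injective
  · rw [List.isChain_map]
    exact p.isChain_adj_support.imp (fun _ _ h => by simpa using h)
  · intro y hy
    rw [List.head?_map, List.head?_eq_some_head (by simp)] at hy
    simpa using hy.symm
  · intro y hy
    rw [List.getLast?_map, List.getLast?_eq_some_getLast (by simp)] at hy
    simpa using hy.symm
  · intro y hy
    simp at hy
    exact hy.1

theorem exists_up (h2 : TwoConnected G) (hE : Elim G f) {v w : V} (hvw : f v < f w) (x : V)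
    (hx : x ≠ v) : ∃ u, Up G f v u ∧ (w ≠ x → u ≠ x) := by
  by_contra hcon
  push Not at hcon
  by_cases hwx : w = x
  · have hcard : 2 < Nat.card V := h2.1
    have : Finite V := Nat.finite_of_card_ne_zero (by omega)
    have : Fintype V := Fintype.ofFinite V
    classical
    rw [Nat.card_eq_fintype_card] at hcard
    obtain ⟨y, hy⟩ : ∃ y, y ∉ ({v, w} : Finset V) := by
      by_contra hc
      push Not at hc
      have h3 : (Finset.univ : Finset V) ⊆ {v, w} := fun y _ => hc y
      have := Finset.card_le_card h3
      have := Finset.card_le_two (a := v) (b := w)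
      rw [Finset.card_univ] at *
      omega
    simp at hy
    exact two_conn h2 hE (u := y) (v := v) (w := w) (fun z hz => absurd hwx (hcon z hz).1)
      (fun e => hy.1 e.symm) (fun e => hy.2 e.symm) hvw
  · exact two_conn h2 hE (u := x) (v := v) (w := w) (fun z hz => (hcon z hz).2) (Ne.symm hx)
      hwx hvw

theorem reach_root (h2 : TwoConnected G) (hE : Elim G f) {r : V} (hr : ∀ v, f v ≤ f r) (m : ℕ)
    (hrm : r ∈ {v | m ≤ f v}) :
    ∀ n a (ha : a ∈ {v | m ≤ f v}), f r - f a ≤ n →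
      (G.induce {v | m ≤ f v}).Reachable ⟨a, ha⟩ ⟨r, hrm⟩ := by
  intro n
  induction n with
  | zero =>
    intro a ha hn
    have : a = r := hE.inj (le_antisymm (hr a) (by omega))
    subst this; exact SimpleGraph.Reachable.refl _
  | succ n ih =>
    intro a ha hn
    by_cases e : a = r
    · subst e; exact SimpleGraph.Reachable.refl _
    · have hlt : f a < f r := lt_of_le_of_ne (hr a) (fun h => e (hE.inj h))
      obtain ⟨u, hu, _⟩ := exists_up h2 hE hlt r (Ne.symm e)
      have hu2 := hu.2
      have hum : u ∈ {v | m ≤ f v} := le_trans ha hu2.le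
      have h1 : (G.induce {v | m ≤ f v}).Adj ⟨a, ha⟩ ⟨u, hum⟩ := by simpa using hu.1
      exact h1.reachable.trans (ih u hum (by omega))

theorem link1 (h2 : TwoConnected G) (hE : Elim G f) {r : V} (hr : ∀ v, f v ≤ f r) {m : ℕ}
    {a b : V} (ha : m ≤ f a) (hb : m ≤ f b) :
    ∃ l, Lnk G (· = a) (· = b) l ∧ ∀ y ∈ l, m ≤ f y := by
  have hrm : r ∈ {v | m ≤ f v} := ha.trans (hr a)
  exact reach_link (s := {v | m ≤ f v}) ha hb
    ((reach_root h2 hE hr m hrm _ a ha le_rfl).trans (reach_root h2 hE hr m hrm _ b hb le_rfl).symm)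

/-- Two disjoint paths linking `{s1,s2}` to `{b1,b2}` above level `m`. -/
def L2 (G : SimpleGraph V) (f : V → ℕ) (m : ℕ) (s1 s2 b1 b2 : V) : Prop :=
  ∃ P1 P2, Lnk G (fun a => a = s1 ∨ a = s2) (fun a => a = b1 ∨ a = b2) P1 ∧
    Lnk G (fun a => a = s1 ∨ a = s2) (fun a => a = b1 ∨ a = b2) P2 ∧
    (∀ a ∈ P1, a ∉ P2) ∧ (∀ a ∈ P1, m ≤ f a) ∧ (∀ a ∈ P2, m ≤ f a)

theorem Lnk.mono {S S' B B' : V → Prop} {l : List V} (h : Lnk G S B l) (hS : ∀ a, S a → S' a)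
    (hB : ∀ a, B a → B' a) : Lnk G S' B' l :=
  ⟨h.1, h.2.1, fun a ha => hS a (h.2.2.1 a ha), fun a ha => hB a (h.2.2.2 a ha)⟩

theorem L2.swapS {m : ℕ} {s1 s2 b1 b2 : V} (h : L2 G f m s1 s2 b1 b2) : L2 G f m s2 s1 b1 b2 := by
  obtain ⟨P1, P2, h1, h2, h3⟩ := h
  exact ⟨P1, P2, h1.mono (fun _ => Or.symm) (fun _ => id), h2.mono (fun _ => Or.symm) (fun _ => id),
    h3⟩

theorem L2.swapB {m : ℕ} {s1 s2 b1 b2 : V} (h : L2 G f m s1 s2 b1 b2) : L2 G f m s1 s2 b2 b1 := by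
  obtain ⟨P1, P2, h1, h2, h3⟩ := h
  exact ⟨P1, P2, h1.mono (fun _ => id) (fun _ => Or.symm), h2.mono (fun _ => id) (fun _ => Or.symm),
    h3⟩

theorem L2.flip {m : ℕ} {s1 s2 b1 b2 : V} (h : L2 G f m s1 s2 b1 b2) : L2 G f m b1 b2 s1 s2 := by
  obtain ⟨P1, P2, h1, h2, h3⟩ := h
  exact ⟨P1.reverse, P2.reverse, h1.rev, h2.rev, by simpa using h3⟩

theorem link2_both (h2 : TwoConnected G) (hE : Elim G f) {r : V} (hr : ∀ v, f v ≤ f r) {m : ℕ}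
    {s1 s2 b2 : V} (hs2 : m < f s2) (hb2 : m < f b2) (hm : f s1 = m) :
    L2 G f m s1 s2 s1 b2 := by
  obtain ⟨l, hl, hl2⟩ := link1 h2 hE hr (m := m + 1) (a := s2) (b := b2) hs2 hb2
  refine ⟨[s1], l, ⟨by simp, ⟨by simp, by simp⟩, by simp, by simp⟩,
    hl.mono (fun _ => Or.inr) (fun _ => Or.inr), ?_, ?_, ?_⟩
  · intro a ha hal
    simp at ha; subst ha
    have := hl2 a hal; omega
  · intro a ha; simp at ha; subst ha; omega
  · intro a ha; have := hl2 a ha; omega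

theorem link2_prep {m : ℕ} {s1 s2 b1 b2 v' : V} (hm : f s1 = m) (hv' : Up G f s1 v')
    {P1 P2 : List V}
    (h1 : Lnk G (fun a => a = v') (fun a => a = b1 ∨ a = b2) P1)
    (h2 : Lnk G (fun a => a = s2) (fun a => a = b1 ∨ a = b2) P2)
    (h3 : ∀ a ∈ P1, a ∉ P2) (h4 : ∀ a ∈ P1, m + 1 ≤ f a) (h5 : ∀ a ∈ P2, m + 1 ≤ f a) :
    L2 G f m s1 s2 b1 b2 := by
  refine ⟨s1 :: P1, P2, ⟨by simp, ⟨?_, ?_⟩, by simp, ?_⟩, h2.mono (fun _ => Or.inr) (fun _ => id),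
    ?_, ?_, ?_⟩
  · rw [List.nodup_cons]
    exact ⟨fun h => by have := h4 _ h; omega, h1.2.1.1⟩
  · rw [List.isChain_cons]
    exact ⟨fun y hy => by rw [h1.2.2.1 y hy]; exact hv'.1, h1.2.1.2⟩
  · intro a ha
    apply h1.2.2.2
    have := h1.1
    rw [List.getLast?_eq_some_getLast (by simp), List.getLast_cons this] at ha
    rw [List.getLast?_eq_some_getLast this]; exact ha
  · intro a ha
    rcases List.mem_cons.mp ha with rfl | ha
    · intro h; have := h5 _ h; omega
    · exact h3 a ha
  · intro a ha
    rcases List.mem_cons.mp ha with rfl | ha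
    · omega
    · have := h4 a ha; omega
  · intro a ha; have := h5 a ha; omega

theorem Lnk.head_eq {S B : V → Prop} {l : List V} (h : Lnk G S B l) :
    ∃ a ∈ l, S a ∧ Lnk G (fun x => x = a) B l := by
  have e := List.head?_eq_some_head h.1
  refine ⟨l.head h.1, List.head_mem _, h.2.2.1 _ e, h.1, h.2.1, ?_, h.2.2.2⟩
  intro x hx
  rw [e] at hx; simpa using hx.symm

theorem link2_core (h2 : TwoConnected G) (hE : Elim G f) {r : V} (hr : ∀ v, f v ≤ f r) {m : ℕ}
    (ih : ∀ s1 s2 b1 b2, s1 ≠ s2 → b1 ≠ b2 → m + 1 ≤ f s1 → m + 1 ≤ f s2 → m + 1 ≤ f b1 →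
      m + 1 ≤ f b2 → L2 G f (m + 1) s1 s2 b1 b2)
    {s1 s2 b1 b2 : V} (hs : s1 ≠ s2) (hb : b1 ≠ b2) (hs2 : m ≤ f s2) (hb1 : m ≤ f b1)
    (hb2 : m ≤ f b2) (hm : f s1 = m) : L2 G f m s1 s2 b1 b2 := by
  have key : ∀ x, x ≠ s1 → m ≤ f x → m < f x := fun x hx hle =>
    lt_of_le_of_ne hle (fun e => hx (hE.inj (by omega)))
  have hs2' := key s2 (Ne.symm hs) hs2
  by_cases e1 : b1 = s1
  · subst e1
    exact link2_both h2 hE hr hs2' (key b2 (Ne.symm hb) hb2) hm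
  by_cases e2 : b2 = s1
  · subst e2
    exact (link2_both h2 hE hr hs2' (key b1 hb hb1) hm).swapB
  have hb1' := key b1 e1 hb1
  have hb2' := key b2 e2 hb2
  obtain ⟨w, hw, hws⟩ : ∃ w, f s1 < f w ∧ w ≠ s2 := by
    by_cases h : b1 = s2
    · exact ⟨b2, by omega, fun h' => hb (h.trans h'.symm)⟩
    · exact ⟨b1, by omega, h⟩
  obtain ⟨v', hv', hne⟩ := exists_up h2 hE hw s2 (Ne.symm hs)
  have hne := hne hws
  have hv2 := hv'.2
  obtain ⟨P1, P2, p1, p2, hd, l1, l2⟩ := ih v' s2 b1 b2 hne hb (by omega) (by omega) (by omega)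
    (by omega)
  obtain ⟨a1, m1, c1, q1⟩ := p1.head_eq
  obtain ⟨a2, m2, c2, q2⟩ := p2.head_eq
  rcases c1 with rfl | rfl <;> rcases c2 with rfl | rfl
  · exact absurd m2 (hd _ m1)
  · exact link2_prep hm hv' q1 q2 hd l1 l2
  · exact link2_prep hm hv' q2 q1 (fun a h h' => hd a h' h) l2 l1
  · exact absurd m2 (hd _ m1)

theorem link2 (h2 : TwoConnected G) (hE : Elim G f) {r : V} (hr : ∀ v, f v ≤ f r) :
    ∀ (k m : ℕ), f r < m + k → ∀ s1 s2 b1 b2, s1 ≠ s2 → b1 ≠ b2 → m ≤ f s1 → m ≤ f s2 → m ≤ f b1 →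
      m ≤ f b2 → L2 G f m s1 s2 b1 b2 := by
  intro k
  induction k with
  | zero => intro m hm s1 s2 b1 b2 _ _ h1; have := hr s1; omega
  | succ k ih =>
    intro m hm s1 s2 b1 b2 hs hb hs1 hs2 hb1 hb2
    have ih' := ih (m + 1) (by omega)
    by_cases e : f s1 = m
    · exact link2_core h2 hE hr ih' hs hb hs2 hb1 hb2 e
    by_cases e : f s2 = m
    · exact (link2_core h2 hE hr ih' hs.symm hb hs1 hb1 hb2 e).swapS
    by_cases e : f b1 = m
    · exact (link2_core h2 hE hr ih' hb hs hb2 hs1 hs2 e).flip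
    by_cases e : f b2 = m
    · exact (link2_core h2 hE hr ih' hb.symm hs hb1 hs1 hs2 e).swapS.flip
    obtain ⟨P1, P2, p1, p2, hd, l1, l2⟩ := ih' s1 s2 b1 b2 hs hb (by omega) (by omega) (by omega)
      (by omega)
    exact ⟨P1, P2, p1, p2, hd, fun a h => by have := l1 a h; omega,
      fun a h => by have := l2 a h; omega⟩

theorem Cy.exists_ne {l : List V} (h : Cy G l) (v : V) : ∃ a ∈ l, a ≠ v := by
  obtain ⟨h1, h2, -, -⟩ := h
  match l, h1, h2 with
  | a :: b :: t, h1, _ =>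
    by_cases e : a = v
    · refine ⟨b, by simp, ?_⟩
      rintro rfl
      subst e
      simp at h1
    · exact ⟨a, by simp, e⟩

theorem lemmaM (h2 : TwoConnected G) (hE : Elim G f) {r : V} (hr : ∀ v, f v ≤ f r) {C C0 : List V}
    (hC : LC G C) (hC0 : LC G C0) : ∃ a b, a ≠ b ∧ a ∈ C ∧ b ∈ C ∧ a ∈ C0 ∧ b ∈ C0 := by
  by_contra hcon
  push Not at hcon
  have hlen : C.length = C0.length := le_antisymm (hC0.2 C hC.1) (hC.2 C0 hC0.1)
  have fin : (∃ l, Cy G l ∧ C.length < l.length) → False := by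
    rintro ⟨l, hl, hlt⟩
    have := hC.2 l hl; omega
  by_cases hv : ∃ v, v ∈ C ∧ v ∈ C0
  · obtain ⟨v, hvC, hvC0⟩ := hv
    obtain ⟨s, hs, hsv⟩ := hC0.1.exists_ne v
    obtain ⟨b, hb, hbv⟩ := hC.1.exists_ne v
    obtain ⟨l, hl, hlv⟩ := reach_link (G := G) (s := {v}ᶜ) hsv hbv ((h2.2 v).preconnected _ _)
    obtain ⟨P, hP, hPl, hPt, hPd⟩ := trim (S := fun a => a ∈ C0 ∧ a ≠ v)
      (B := fun a => a ∈ C ∧ a ≠ v) _ l le_rfl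
      (hl.mono (by rintro a rfl; exact ⟨hs, hsv⟩) (by rintro a rfl; exact ⟨hb, hbv⟩))
    have hPv : ∀ a ∈ P, a ≠ v := fun a ha => hlv a (hPl a ha)
    apply fin
    refine merge (P1 := [v]) (P2 := P) hC.1 hC0.1 hlen
      ⟨by simp, ⟨by simp, by simp⟩, by simpa using hvC0, by simpa using hvC⟩
      (hP.mono (fun _ => And.left) (fun _ => And.left)) (by simp) ?_ (by simp) ?_ ?_ ?_
    · intro a ha h
      exact hPt a ha ⟨h, hPv a (List.mem_of_mem_tail ha)⟩
    · intro a ha h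
      exact hPd a ha ⟨h, hPv a (List.mem_of_mem_dropLast ha)⟩
    · intro a ha h
      exact hPv a h (by simpa using ha)
    · intro a ha h
      by_contra hne
      exact hcon a v (by simpa using hne) ha hvC h hvC0
  · push Not at hv
    obtain ⟨s1, hs1, -⟩ := hC0.1.exists_ne r
    obtain ⟨b1, hb1, -⟩ := hC.1.exists_ne r
    obtain ⟨s2, hs2, hs⟩ := hC0.1.exists_ne s1
    obtain ⟨b2, hb2, hb⟩ := hC.1.exists_ne b1
    obtain ⟨P1, P2, p1, p2, hd, -, -⟩ := link2 h2 hE hr (f r + 1) 0 (by omega) s1 s2 b1 b2 hs.symm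
      hb.symm (by omega) (by omega) (by omega) (by omega)
    obtain ⟨Q1, q1, s1, t1, d1⟩ := trim (S := (· ∈ C0)) (B := (· ∈ C)) _ P1 le_rfl
      (p1.mono (by rintro a (rfl | rfl) <;> assumption) (by rintro a (rfl | rfl) <;> assumption))
    obtain ⟨Q2, q2, s2, t2, d2⟩ := trim (S := (· ∈ C0)) (B := (· ∈ C)) _ P2 le_rfl
      (p2.mono (by rintro a (rfl | rfl) <;> assumption) (by rintro a (rfl | rfl) <;> assumption))
    exact fin (merge hC.1 hC0.1 hlen q1 q2 t1 t2 d1 d2 (fun a h h' => hd a (s1 a h) (s2 a h'))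
      (fun a h h' => absurd h' (hv a h)))

end

end LCT

namespace LCT

section
variable {V : Type} {G : SimpleGraph V} {f : V → ℕ}

theorem exists_min {α : Type} (g : α → ℕ) (P : α → Prop) (h : ∃ a, P a) :
    ∃ a, P a ∧ ∀ b, P b → g a ≤ g b := by
  classical
  have hex : ∃ n, ∃ a, P a ∧ g a = n := by obtain ⟨a, ha⟩ := h; exact ⟨_, a, ha, rfl⟩
  obtain ⟨a, ha, e⟩ := Nat.find_spec hex
  exact ⟨a, ha, fun b hb => by rw [e]; exact Nat.find_min' hex ⟨b, hb, rfl⟩⟩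

theorem exists_max {α : Type} (g : α → ℕ) (M : ℕ) (P : α → Prop) (h : ∃ a, P a)
    (hM : ∀ a, P a → g a ≤ M) : ∃ a, P a ∧ ∀ b, P b → g b ≤ g a := by
  obtain ⟨a, ha, hm⟩ := exists_min (fun a => M - g a) P h
  refine ⟨a, ha, fun b hb => ?_⟩
  have := hm b hb
  have := hM a ha
  have := hM b hb
  omega

theorem exists_reach (hE : Elim G f) (Q : V → Prop)
    (hcomp : ∀ q q', Q q → Q q' → f q' ≤ f q → D G f q q') {q0 : V} (hq0 : Q q0) :
    ∃ a1 a2, Bag G f q0 a1 ∧ Bag G f q0 a2 ∧ ∀ c, Bag G f q0 c → c ≠ a1 → c ≠ a2 →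
      a1 ≠ a2 ∧ ∀ q, Q q → Bag G f q c → f q ≤ f q0 → Bag G f q a1 ∧ Bag G f q a2 := by
  obtain ⟨⟨a1, q1⟩, ⟨h1, hQ1, hB1⟩, hm1⟩ := exists_min (fun p : V × V => f p.2)
    (fun p => Bag G f q0 p.1 ∧ Q p.2 ∧ Bag G f p.2 p.1) ⟨(q0, q0), Or.inl rfl, hq0, Or.inl rfl⟩
  by_cases hex : ∃ c, Bag G f q0 c ∧ c ≠ a1
  · obtain ⟨c0, hc0, hne0⟩ := hex
    obtain ⟨⟨a2, q2⟩, ⟨h2, hQ2, hB2, hne⟩, hm2⟩ := exists_min (fun p : V × V => f p.2)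
      (fun p => Bag G f q0 p.1 ∧ Q p.2 ∧ Bag G f p.2 p.1 ∧ p.1 ≠ a1)
      ⟨(c0, q0), hc0, hq0, hc0, hne0⟩
    refine ⟨a1, a2, h1, h2, fun c hc hc1 hc2 => ⟨Ne.symm hne, fun q hq hqc hle => ?_⟩⟩
    have k1 := hm1 (c, q) ⟨hc, hq, hqc⟩
    have k2 := hm2 (c, q) ⟨hc, hq, hqc, hc1⟩
    exact ⟨bag_between hE hB1 (bag_le h1) (hcomp q q1 hq hQ1 k1) hle,
      bag_between hE hB2 (bag_le h2) (hcomp q q2 hq hQ2 k2) hle⟩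
  · push Not at hex
    exact ⟨a1, a1, h1, h1, fun c hc hc1 => absurd (hex c hc) hc1⟩

/-- size of the subtree below `x` -/
noncomputable def sz (G : SimpleGraph V) (f : V → ℕ) (x : V) : ℕ := {w | D G f x w}.ncard

/-- the heavy path below `x` -/
def HQ (G : SimpleGraph V) (f : V → ℕ) (x q : V) : Prop := D G f x q ∧ sz G f x < 2 * sz G f q

theorem sz_mono [Finite V] {x y : V} (h : D G f x y) : sz G f y ≤ sz G f x :=
  Set.ncard_le_ncard (fun _ hw => D.trans h hw) (Set.toFinite _)

theorem sz_pos [Finite V] (x : V) : 0 < sz G f x := by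
  unfold sz
  rw [Set.ncard_pos]
  exact ⟨x, D.refl x⟩

theorem HQ.self [Finite V] (x : V) : HQ G f x x := by
  refine ⟨D.refl x, ?_⟩
  have := sz_pos (G := G) (f := f) x
  omega

theorem HQ.comp [Finite V] (hE : Elim G f) {x q q' : V} (h : HQ G f x q) (h' : HQ G f x q')
    (hle : f q' ≤ f q) : D G f q q' := by
  have hmeet : ∃ w, D G f q w ∧ D G f q' w := by
    by_contra hcon
    push Not at hcon
    have hd : Disjoint {w | D G f q w} {w | D G f q' w} := by
      rw [Set.disjoint_left]; exact hcon
    have e := Set.ncard_union_eq hd (Set.toFinite _) (Set.toFinite _)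
    have hsub : {w | D G f q w} ∪ {w | D G f q' w} ⊆ {w | D G f x w} := by
      rintro w (hw | hw)
      · exact h.1.trans hw
      · exact h'.1.trans hw
    have := Set.ncard_le_ncard hsub (Set.toFinite _)
    have h1 := h.2
    have h2 := h'.2
    unfold sz at h1 h2
    omega
  obtain ⟨w, hw, hw'⟩ := hmeet
  rcases D_total hE hw hw' with hd | hd
  · exact hd
  · have : q = q' := hE.inj (le_antisymm hd.le hle)
    subst this; exact hd

theorem HQ.up [Finite V] {x q : V} (h : HQ G f x q) (hne : q ≠ x) :
    ∃ q', Par G f q q' ∧ HQ G f x q' := by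
  rcases Relation.ReflTransGen.cases_head h.1 with e | ⟨c, h1, h2⟩
  · exact absurd e hne
  · refine ⟨c, h1, h2, ?_⟩
    have := sz_mono (G := G) (f := f) (x := c) (y := q) (Relation.ReflTransGen.single h1)
    have := h.2
    omega

theorem HQ.off {x q z : V} (h : HQ G f x q) (hz : Par G f z q) (hn : ¬ HQ G f x z) :
    2 * sz G f z ≤ sz G f x := by
  by_contra hcon
  exact hn ⟨h.1.trans (Relation.ReflTransGen.single hz), by omega⟩

theorem last_cons_concat (a : V) (l : List V) (b : V) : (a :: (l ++ [b])).getLast? = some b := by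
  rw [← List.cons_append, List.getLast?_concat]

theorem seg2 {l : List V} (h : Cy G l) (P : V → Prop) (hw : ∃ w ∈ l, P w)
    (hu : ∃ a b, a ≠ b ∧ a ∈ l ∧ b ∈ l ∧ ¬ P a ∧ ¬ P b) :
    ∃ c' m c I, Cy G ((c' :: (m ++ [c])) ++ I) ∧ ((c' :: (m ++ [c])) ++ I).Perm l ∧ I ≠ [] ∧
      (∀ a ∈ I, P a) ∧ ¬ P c ∧ ¬ P c' ∧ c ≠ c' ∧ Pth G (c :: (I ++ [c'])) := by
  obtain ⟨a, b, hab, ha, hb, hPa, hPb⟩ := hu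
  obtain ⟨o, I, hC, hp, ho, hI, hIP, hh, hl⟩ := seg h P hw ⟨a, ha, hPa⟩
  have hmem : ∀ y ∈ l, ¬ P y → y ∈ o := by
    intro y hy hPy
    rcases List.mem_append.mp (hp.mem_iff.mpr hy) with h | h
    · exact h
    · exact absurd (hIP y h) hPy
  have hao := hmem a ha hPa
  have hbo := hmem b hb hPb
  cases o with
  | nil => exact absurd rfl ho
  | cons c' t =>
    rcases t.eq_nil_or_concat with rfl | ⟨m, c, rfl⟩
    · simp at hao hbo
      exact absurd (hao.trans hbo.symm) hab
    · rw [List.concat_eq_append] at *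
      refine ⟨c', m, c, I, hC, hp, hI, hIP, hl c ?_, hh c' (by simp), ?_, ?_⟩
      · exact last_cons_concat _ _ _
      · rintro rfl
        have := hC.1
        simp at this
      · have hC' : Cy G ((c' :: m) ++ ([c] ++ I)) := by simpa using hC
        have h3 := hC'.rot
        have h4 : Pth G ([] ++ (c :: (I ++ [c'])) ++ m) := by
          have e : [] ++ (c :: (I ++ [c'])) ++ m = ([c] ++ I) ++ (c' :: m) := by simp
          rw [e]; exact ⟨h3.1, h3.2.2.1⟩
        exact h4.mid

theorem glue_path {a1 a2 b1 b2 : V} {J : List V} (ha : a1 ≠ a2)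
    (hP : Pth G (b1 :: (J ++ [b2])))
    (h1 : a1 ≠ b1 → G.Adj a1 b1) (h2 : a2 ≠ b2 → G.Adj b2 a2) (h12 : a1 ≠ b2) (h21 : a2 ≠ b1)
    (hJ1 : a1 ∉ J) (hJ2 : a2 ∉ J) :
    ∃ X, Lnk G (· = a1) (· = a2) X ∧ (∀ y ∈ X, y = a1 ∨ y = a2 ∨ y = b1 ∨ y = b2 ∨ y ∈ J) ∧
      J.length + 2 ≤ X.length := by
  have step : ∃ X, Lnk G (· = b1) (· = a2) X ∧
      (∀ y ∈ X, y = a2 ∨ y = b1 ∨ y = b2 ∨ y ∈ J) ∧ J.length + 2 ≤ X.length := by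
    by_cases e : a2 = b2
    · subst e
      refine ⟨b1 :: (J ++ [a2]), ⟨by simp, hP, by simp, ?_⟩, ?_, by simp⟩
      · intro y hy
        rw [last_cons_concat] at hy
        simpa using hy.symm
      · intro y hy; simp at hy; tauto
    · refine ⟨(b1 :: (J ++ [b2])) ++ [a2], ⟨by simp, ⟨?_, ?_⟩, by simp, ?_⟩, ?_, by simp⟩
      · rw [List.nodup_append]
        refine ⟨hP.1, by simp, ?_⟩
        intro y hy y' hy' e'
        simp at hy hy'
        subst hy'; subst e'
        rcases hy with h | h | h
        · exact h21 h
        · exact hJ2 h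
        · exact e h
      · rw [List.isChain_append]
        refine ⟨hP.2, by simp, ?_⟩
        intro y hy y' hy'
        rw [last_cons_concat] at hy
        simp at hy hy'
        subst hy; subst hy'
        exact h2 e
      · intro y hy
        rw [List.getLast?_append] at hy
        simpa using hy.symm
      · intro y hy; simp at hy; tauto
  obtain ⟨X, hX, hXm, hXl⟩ := step
  by_cases e : a1 = b1
  · subst e
    exact ⟨X, hX, fun y hy => by have := hXm y hy; tauto, hXl⟩
  · refine ⟨a1 :: X, ⟨by simp, ⟨?_, ?_⟩, by simp, ?_⟩, ?_, by simp; omega⟩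
    · rw [List.nodup_cons]
      refine ⟨fun h => ?_, hX.2.1.1⟩
      rcases hXm _ h with h | h | h | h
      · exact ha h
      · exact e h
      · exact h12 h
      · exact hJ1 h
    · rw [List.isChain_cons]
      exact ⟨fun y hy => by rw [hX.2.2.1 y hy]; exact h1 e, hX.2.1.2⟩
    · intro y hy
      apply hX.2.2.2
      rw [List.getLast?_eq_some_getLast (by simp), List.getLast_cons hX.1] at hy
      rw [List.getLast?_eq_some_getLast hX.1]; exact hy
    · intro y hy
      rcases List.mem_cons.mp hy with h | h
      · exact Or.inl h
      · have := hXm y h; tauto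

theorem glue {a1 a2 b1 b2 : V} {J : List V} (ha : a1 ≠ a2) (hb : b1 ≠ b2)
    (hP : Pth G (b1 :: (J ++ [b2])))
    (h11 : a1 ≠ b1 → G.Adj a1 b1) (h12 : a1 ≠ b2 → G.Adj a1 b2)
    (h21 : a2 ≠ b1 → G.Adj a2 b1) (h22 : a2 ≠ b2 → G.Adj a2 b2)
    (hJ1 : a1 ∉ J) (hJ2 : a2 ∉ J) :
    ∃ X, Lnk G (· = a1) (· = a2) X ∧ (∀ y ∈ X, y = a1 ∨ y = a2 ∨ y = b1 ∨ y = b2 ∨ y ∈ J) ∧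
      J.length + 2 ≤ X.length := by
  by_cases h : a1 = b2 ∨ a2 = b1
  · obtain ⟨X, hX, hm, hl⟩ := glue_path (G := G) (a1 := a1) (a2 := a2) (b1 := b2) (b2 := b1)
      (J := J.reverse) ha (by simpa using hP.rev) h12 (fun h => (h21 h).symm)
      (by rcases h with rfl | rfl
          · exact hb.symm
          · exact ha)
      (by rcases h with rfl | rfl
          · exact ha.symm
          · exact hb) (by simpa using hJ1) (by simpa using hJ2)
    exact ⟨X, hX, fun y hy => by have := hm y hy; simp at this; tauto, by simpa using hl⟩
  · push Not at h
    exact glue_path ha hP h11 (fun h => (h22 h).symm) h.1 h.2 hJ1 hJ2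

theorem glue_false {a1 a2 b1 b2 c c' : V} {J m I : List V} (ha : a1 ≠ a2) (hb : b1 ≠ b2)
    (hP : Pth G (b1 :: (J ++ [b2])))
    (h11 : a1 ≠ b1 → G.Adj a1 b1) (h12 : a1 ≠ b2 → G.Adj a1 b2)
    (h21 : a2 ≠ b1 → G.Adj a2 b1) (h22 : a2 ≠ b2 → G.Adj a2 b2)
    (hJ1 : a1 ∉ J) (hJ2 : a2 ∉ J) (hC : LC G ((c' :: (m ++ [c])) ++ I))
    (hle : I.length ≤ J.length) (hc : G.Adj c a1) (hc' : G.Adj a2 c')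
    (o1 : a1 ∉ c' :: (m ++ [c])) (o2 : a2 ∉ c' :: (m ++ [c])) (o3 : b1 ∉ c' :: (m ++ [c]))
    (o4 : b2 ∉ c' :: (m ++ [c])) (oJ : ∀ w ∈ J, w ∉ c' :: (m ++ [c])) : False := by
  obtain ⟨X, hX, hXm, hXl⟩ := glue ha hb hP h11 h12 h21 h22 hJ1 hJ2
  have hcy := hC.1
  have := hC.2 ((c' :: (m ++ [c])) ++ X) ⟨?_, ?_, ?_, ?_⟩
  · simp at this; omega
  · rw [List.nodup_append]
    refine ⟨(List.nodup_append.mp hcy.1).1, hX.2.1.1, ?_⟩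
    rintro y hy y' hy' rfl
    rcases hXm y hy' with rfl | rfl | rfl | rfl | h
    · exact o1 hy
    · exact o2 hy
    · exact o3 hy
    · exact o4 hy
    · exact oJ y h hy
  · simp; omega
  · rw [List.isChain_append]
    refine ⟨(List.isChain_append.mp hcy.2.2.1).1, hX.2.1.2, ?_⟩
    intro y hy y' hy'
    rw [hX.2.2.1 y' hy']
    rw [last_cons_concat] at hy
    simp at hy
    subst hy; exact hc
  · intro y hy y' hy'
    simp at hy'
    subst hy'
    have e := List.getLast?_eq_some_getLast hX.1
    rw [List.getLast?_append, e] at hy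
    have e2 := hX.2.2.2 _ e
    simp at hy
    rw [← hy, e2]; exact hc'

theorem claimS [Finite V] (h2 : TwoConnected G) (hE : Elim G f) {r : V} (hr : ∀ v, f v ≤ f r)
    {x : V} {F : List V → Prop} (hF : ∀ C, F C → LC G C)
    (hout : ∀ z q, HQ G f x q → Par G f z q → ¬ HQ G f x z → ∀ C, F C →
      ∃ a b, a ≠ b ∧ a ∈ C ∧ b ∈ C ∧ ¬ D G f z a ∧ ¬ D G f z b)
    {q0 : V} (hq0 : HQ G f x q0) (hq0F : ∀ C, F C → ∃ w ∈ C, D G f q0 w)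
    (hq0m : ∀ q, HQ G f x q → f q < f q0 → ∃ C, F C ∧ ∀ w ∈ C, ¬ D G f q w)
    {a1 a2 : V} (hb1 : Bag G f q0 a1) (hb2 : Bag G f q0 a2)
    (hreach : ∀ c, Bag G f q0 c → c ≠ a1 → c ≠ a2 → a1 ≠ a2 ∧ ∀ q, HQ G f x q →
      Bag G f q c → f q ≤ f q0 → Bag G f q a1 ∧ Bag G f q a2)
    {C : List V} (hC : F C) (hn1 : a1 ∉ C) (hn2 : a2 ∉ C) :
    a1 ≠ a2 ∧ ∃ z q, HQ G f x q ∧ Par G f z q ∧ ¬ HQ G f x z ∧ Bag G f q a1 ∧ Bag G f q a2 ∧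
      ∃ w ∈ C, D G f z w := by
  have hL := hF C hC
  by_cases hi : ∃ q, HQ G f x q ∧ f q < f q0 ∧ ∃ w ∈ C, D G f q w
  · obtain ⟨p, ⟨hpQ, hp0, w, hwC, hwp⟩, hpmax⟩ := exists_max f (f q0)
      (fun q => HQ G f x q ∧ f q < f q0 ∧ ∃ w ∈ C, D G f q w) hi (fun q hq => hq.2.1.le)
    have hpx : p ≠ x := by
      rintro rfl
      have := hq0.1.le; omega
    have hpp : Par G f p q0 := by
      obtain ⟨q', hq', hQ'⟩ := hpQ.up hpx
      have hd := D_par hE hq' (HQ.comp hE hq0 hpQ hp0.le) (by rintro rfl; omega)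
      rcases lt_or_eq_of_le hd.le with h | h
      · have := hpmax q' ⟨hQ', h, w, hwC, D.trans (Relation.ReflTransGen.single hq') hwp⟩
        have := hq'.lt; omega
      · rw [← hE.inj h]; exact hq'
    obtain ⟨C0, hC0, hC0m⟩ := hq0m p hpQ hp0
    obtain ⟨u, -, -, huC, -, huC0, -⟩ := lemmaM h2 hE hr hL (hF C0 hC0)
    obtain ⟨l, hl, hperm, hh, hlast⟩ := cross hL.1 (D G f p) ⟨w, hwC, hwp⟩ ⟨u, huC, hC0m u huC0⟩
    have hlne : l ≠ [] := by rintro rfl; simpa using hl.2.1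
    have eh := List.head?_eq_some_head hlne
    have el := List.getLast?_eq_some_getLast hlne
    generalize hcp : l.head hlne = cp at eh
    generalize hc : l.getLast hlne = c at el
    have hadj : G.Adj c cp := hl.2.2.2 c el cp eh
    have hcpP := hh cp eh
    have hcP := hlast c el
    have hcC : c ∈ C := hperm.mem_iff.mp (hc ▸ List.getLast_mem hlne)
    have hcpC : cp ∈ C := hperm.mem_iff.mp (hcp ▸ List.head_mem hlne)
    have hcb : Bag G f q0 c := up_par hE hpp (D_adj hE hadj hcpP hcP)
    have hc1 : c ≠ a1 := fun e => hn1 (e ▸ hcC)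
    have hc2 : c ≠ a2 := fun e => hn2 (e ▸ hcC)
    obtain ⟨q1, ⟨hq1Q, hq1D⟩, hq1m⟩ := exists_min f (fun q => HQ G f x q ∧ D G f q cp)
      ⟨p, hpQ, hcpP⟩
    have hle : f q1 ≤ f p := hq1m p ⟨hpQ, hcpP⟩
    have hDq1 : D G f p q1 := HQ.comp hE hpQ hq1Q hle
    have hup : Bag G f q1 c := Or.inr (D_adj hE hadj hq1D (fun h => hcP (hDq1.trans h)))
    obtain ⟨hne, hre⟩ := hreach c hcb hc1 hc2
    obtain ⟨g1, g2⟩ := hre q1 hq1Q hup (by omega)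
    refine ⟨hne, ?_⟩
    by_cases e : cp = q1
    · exfalso
      refine insert_false (hL.perm hl hperm) (a := a1) (fun h => hn1 (hperm.mem_iff.mp h)) ?_ ?_
      · intro y hy
        rw [eh] at hy
        simp only [Option.mem_def, Option.some.injEq] at hy
        subst hy
        exact bag_adj hE (Or.inl e) g1 (fun e => hn1 (e ▸ hcpC))
      · intro y hy
        rw [el] at hy
        simp only [Option.mem_def, Option.some.injEq] at hy
        subst hy
        exact bag_adj hE hup g1 hc1
    · obtain ⟨z, hz, hzD⟩ := D_child hq1D e
      refine ⟨z, q1, hq1Q, hz, ?_, g1, g2, cp, hcpC, hzD⟩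
      intro hQz
      have := hq1m z ⟨hQz, hzD⟩
      have := hz.lt
      omega
  · push Not at hi
    by_cases hw : ∃ w ∈ C, D G f q0 w ∧ w ≠ q0
    · obtain ⟨w, hwC, hwD, hwne⟩ := hw
      obtain ⟨z, hz, hzD⟩ := D_child hwD hwne
      have hzQ : ¬ HQ G f x z := fun h => hi z h hz.lt w hwC hzD
      refine ⟨?_, z, q0, hq0, hz, hzQ, hb1, hb2, w, hwC, hzD⟩
      obtain ⟨u, -, -, huC, -, huz, -⟩ := hout z q0 hq0 hz hzQ C hC
      obtain ⟨l, hl, hperm, hh, hlast⟩ := cross hL.1 (D G f z) ⟨w, hwC, hzD⟩ ⟨u, huC, huz⟩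
      have hlne : l ≠ [] := by rintro rfl; simpa using hl.2.1
      have eh := List.head?_eq_some_head hlne
      have el := List.getLast?_eq_some_getLast hlne
      have hadj := hl.2.2.2 _ el _ eh
      have hcC : l.getLast hlne ∈ C := hperm.mem_iff.mp (List.getLast_mem hlne)
      exact (hreach _ (up_par hE hz (D_adj hE hadj (hh _ eh) (hlast _ el)))
        (fun e => hn1 (e ▸ hcC)) (fun e => hn2 (e ▸ hcC))).1
    · exfalso
      push Not at hw
      obtain ⟨w, hwC, hwD⟩ := hq0F C hC
      obtain ⟨u, huC, hu⟩ := hL.1.exists_ne q0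
      obtain ⟨l, hl, hperm, hh, hlast⟩ := cross hL.1 (D G f q0) ⟨w, hwC, hwD⟩
        ⟨u, huC, fun h => hu (hw u huC h)⟩
      have hlne : l ≠ [] := by rintro rfl; simpa using hl.2.1
      have eh := List.head?_eq_some_head hlne
      have el := List.getLast?_eq_some_getLast hlne
      have hadj := hl.2.2.2 _ el _ eh
      have hcC : l.getLast hlne ∈ C := hperm.mem_iff.mp (List.getLast_mem hlne)
      have hhC : l.head hlne ∈ C := hperm.mem_iff.mp (List.head_mem hlne)
      have hup := D_adj hE hadj (hh _ eh) (hlast _ el)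
      refine insert_false (hL.perm hl hperm) (a := a1) (fun h => hn1 (hperm.mem_iff.mp h)) ?_ ?_
      · intro y hy
        rw [eh] at hy
        simp only [Option.mem_def, Option.some.injEq] at hy
        subst hy
        exact bag_adj hE (Or.inl (hw _ hhC (hh _ eh))) hb1 (fun e => hn1 (e ▸ hhC))
      · intro y hy
        rw [el] at hy
        simp only [Option.mem_def, Option.some.injEq] at hy
        subst hy
        exact bag_adj hE (Or.inr hup) hb1 (fun e => hn1 (e ▸ hcC))

/-- Candidate detours. -/
def Cand (G : SimpleGraph V) (f : V → ℕ) (x a1 a2 : V) (t : V × V × V × List V) : Prop :=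
  ∃ q, HQ G f x q ∧ Par G f t.1 q ∧ ¬ HQ G f x t.1 ∧ Bag G f q a1 ∧ Bag G f q a2 ∧
    Up G f t.1 t.2.1 ∧ Up G f t.1 t.2.2.1 ∧ t.2.1 ≠ t.2.2.1 ∧
    Pth G (t.2.1 :: (t.2.2.2 ++ [t.2.2.1])) ∧ ∀ w ∈ t.2.2.2, D G f t.1 w

theorem cand_of (hE : Elim G f) {x a1 a2 : V} {l : List V} (hl : LC G l) {z q : V}
    (hq : HQ G f x q) (hz : Par G f z q) (hzQ : ¬ HQ G f x z)
    (g1 : Bag G f q a1) (g2 : Bag G f q a2) (hw : ∃ w ∈ l, D G f z w)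
    (hu : ∃ a b, a ≠ b ∧ a ∈ l ∧ b ∈ l ∧ ¬ D G f z a ∧ ¬ D G f z b) :
    ∃ c' m c I, LC G ((c' :: (m ++ [c])) ++ I) ∧ ((c' :: (m ++ [c])) ++ I).Perm l ∧
      Bag G f q c ∧ Bag G f q c' ∧ Cand G f x a1 a2 (z, c, c', I) := by
  obtain ⟨c', m, c, I, hC, hp, hI, hIP, hPc, hPc', hne, hP⟩ := seg2 hl.1 (D G f z) hw hu
  have hch := hP.2
  rw [List.isChain_cons, List.isChain_append] at hch
  have eh := List.head?_eq_some_head hI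
  have el := List.getLast?_eq_some_getLast hI
  have u1 : Up G f z c := by
    refine D_adj hE (hch.1 (I.head hI) ?_) (hIP _ (List.head_mem hI)) hPc
    rw [List.head?_append, eh]; simp
  have u2 : Up G f z c' :=
    D_adj hE (hch.2.2.2 _ el c' (by simp)).symm (hIP _ (List.getLast_mem hI)) hPc'
  exact ⟨c', m, c, I, hl.perm hC hp, hp, up_par hE hz u1, up_par hE hz u2, q, hq, hz, hzQ, g1, g2,
    u1, u2, hne, hP, hIP⟩

theorem step [Finite V] (h2 : TwoConnected G) (hE : Elim G f) {r : V} (hr : ∀ v, f v ≤ f r)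
    {x : V} {F : List V → Prop} (hF : ∀ C, F C → LC G C)
    (hx : ∀ C, F C → ∃ w ∈ C, D G f x w) :
    ∃ B : Finset V, B.card ≤ 4 ∧ ((∀ C, F C → ∃ b ∈ B, b ∈ C) ∨
      ∃ z, 2 * sz G f z ≤ sz G f x ∧ ∀ C, F C → (∀ b ∈ B, b ∉ C) → ∃ w ∈ C, D G f z w) := by
  classical
  by_cases h0 : ∃ q z, HQ G f x q ∧ Par G f z q ∧ ¬ HQ G f x z ∧ ∀ C, F C → ∃ w ∈ C, D G f z w
  · obtain ⟨q, z, hq, hz, hzQ, hz2⟩ := h0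
    exact ⟨∅, by simp, Or.inr ⟨z, hq.off hz hzQ, fun C hC _ => hz2 C hC⟩⟩
  push Not at h0
  have hout : ∀ z q, HQ G f x q → Par G f z q → ¬ HQ G f x z → ∀ C, F C →
      ∃ a b, a ≠ b ∧ a ∈ C ∧ b ∈ C ∧ ¬ D G f z a ∧ ¬ D G f z b := by
    intro z q hq hz hzQ C hC
    obtain ⟨C0, hC0, hC0m⟩ := h0 q z hq hz hzQ
    obtain ⟨a, b, hab, ha, hb, ha0, hb0⟩ := lemmaM h2 hE hr (hF C hC) (hF C0 hC0)
    exact ⟨a, b, hab, ha, hb, hC0m a ha0, hC0m b hb0⟩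
  obtain ⟨q0, ⟨hq0, hq0F⟩, hmin⟩ := exists_min f
    (fun q => HQ G f x q ∧ ∀ C, F C → ∃ w ∈ C, D G f q w) ⟨x, HQ.self x, hx⟩
  have hq0m : ∀ q, HQ G f x q → f q < f q0 → ∃ C, F C ∧ ∀ w ∈ C, ¬ D G f q w := by
    intro q hq hlt
    by_contra hcon
    push Not at hcon
    have := hmin q ⟨hq, hcon⟩
    omega
  obtain ⟨a1, a2, hb1, hb2, hreach⟩ := exists_reach hE (HQ G f x)
    (fun q q' h h' hle => HQ.comp hE h h' hle) hq0
  have hS := fun C (hC : F C) (hn1 : a1 ∉ C) (hn2 : a2 ∉ C) =>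
    claimS h2 hE hr hF hout hq0 hq0F hq0m hb1 hb2 hreach hC hn1 hn2
  by_cases hcand : ∃ t, Cand G f x a1 a2 t
  · have hbound : ∀ t, Cand G f x a1 a2 t → t.2.2.2.length ≤ Nat.card V := by
      rintro ⟨z, b1, b2, J⟩ ⟨q, -, -, -, -, -, -, -, -, hP, -⟩
      have : Fintype V := Fintype.ofFinite V
      have hn := hP.1
      rw [List.nodup_cons, List.nodup_append] at hn
      rw [Nat.card_eq_fintype_card]
      exact hn.2.1.length_le_card
    obtain ⟨⟨z, b1, b2, J⟩, ⟨q, hq, hz, hzQ, g1, g2, u1, u2, hbne, hP, hJ⟩, hmax⟩ :=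
      exists_max (fun t : V × V × V × List V => t.2.2.2.length) (Nat.card V)
        (Cand G f x a1 a2) hcand hbound
    simp only at hz hzQ u1 u2 hbne hP hJ hmax
    refine ⟨{a1, a2, b1, b2}, Finset.card_le_four, Or.inr ⟨z, hq.off hz hzQ, ?_⟩⟩
    intro C hC hav
    simp only [Finset.mem_insert, Finset.mem_singleton, forall_eq_or_imp, forall_eq] at hav
    obtain ⟨n1, n2, n3, n4⟩ := hav
    by_contra hmiss
    push Not at hmiss
    obtain ⟨hne, z', q', hq', hz', hzQ', g1', g2', hw'⟩ := hS C hC n1 n2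
    obtain ⟨c', m, c, I, hL, hp, hc, hc', hcd⟩ := cand_of hE (hF C hC) hq' hz' hzQ' g1' g2' hw'
      (hout z' q' hq' hz' hzQ' C hC)
    have hle := hmax _ hcd
    have hmem : ∀ y, y ∈ c' :: (m ++ [c]) → y ∈ C := fun y hy =>
      hp.mem_iff.mp (List.mem_append_left _ hy)
    have v1 := up_par hE hz u1
    have v2 := up_par hE hz u2
    have hJa : ∀ a, Bag G f q a → a ∉ J := by
      intro a ha haJ
      have := (hJ a haJ).le
      have := bag_le ha
      have := hz.lt
      omega
    have hcC := hmem c (by simp)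
    have hcC' := hmem c' (by simp)
    exact glue_false hne hbne hP (fun h => bag_adj hE g1 v1 h) (fun h => bag_adj hE g1 v2 h)
      (fun h => bag_adj hE g2 v1 h) (fun h => bag_adj hE g2 v2 h) (hJa a1 g1) (hJa a2 g2) hL hle
      (bag_adj hE hc g1' (fun e => n1 (e ▸ hcC))) (bag_adj hE g2' hc' (fun e => n2 (e ▸ hcC')))
      (fun h => n1 (hmem _ h)) (fun h => n2 (hmem _ h)) (fun h => n3 (hmem _ h))
      (fun h => n4 (hmem _ h)) (fun w hw h => hmiss w (hmem w h) (hJ w hw))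
  · refine ⟨{a1, a2}, (Finset.card_le_two).trans (by omega), Or.inl ?_⟩
    intro C hC
    by_contra hcon
    push Not at hcon
    simp only [Finset.mem_insert, Finset.mem_singleton, forall_eq_or_imp, forall_eq] at hcon
    obtain ⟨hne, z', q', hq', hz', hzQ', g1', g2', hw'⟩ := hS C hC hcon.1 hcon.2
    obtain ⟨c', m, c, I, hL, hp, hc, hc', hcd⟩ := cand_of hE (hF C hC) hq' hz' hzQ' g1' g2' hw'
      (hout z' q' hq' hz' hzQ' C hC)
    exact hcand ⟨_, hcd⟩

theorem main_ind [Finite V] (h2 : TwoConnected G) (hE : Elim G f) {r : V} (hr : ∀ v, f v ≤ f r) :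
    ∀ (k : ℕ) (x : V) (F : List V → Prop), sz G f x < 2 ^ k → (∀ C, F C → LC G C) →
      (∀ C, F C → ∃ w ∈ C, D G f x w) →
      ∃ A : Finset V, A.card ≤ 4 * k ∧ ∀ C, F C → ∃ a ∈ A, a ∈ C := by
  classical
  intro k
  induction k with
  | zero =>
    intro x F h
    have := sz_pos (G := G) (f := f) x
    simp at h; omega
  | succ k ih =>
    intro x F h hF hx
    obtain ⟨B, hB, hB2 | ⟨z, hz, hz2⟩⟩ := step h2 hE hr hF hx
    · exact ⟨B, by omega, hB2⟩
    · obtain ⟨A, hA, hA2⟩ := ih z (fun C => F C ∧ ∀ b ∈ B, b ∉ C) (by rw [pow_succ] at h; omega)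
        (fun C hC => hF C hC.1) (fun C hC => hz2 C hC.1 hC.2)
      refine ⟨A ∪ B, (Finset.card_union_le A B).trans (by omega), ?_⟩
      intro C hC
      by_cases hb : ∃ b ∈ B, b ∈ C
      · obtain ⟨b, hb, hbC⟩ := hb
        exact ⟨b, Finset.mem_union_right _ hb, hbC⟩
      · push Not at hb
        obtain ⟨a, ha, haC⟩ := hA2 C ⟨hC, hb⟩
        exact ⟨a, Finset.mem_union_left _ ha, haC⟩

theorem D_root (h2 : TwoConnected G) (hE : Elim G f) {r : V} (hr : ∀ v, f v ≤ f r) :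
    ∀ n a, f r - f a ≤ n → D G f r a := by
  intro n
  induction n with
  | zero =>
    intro a hn
    have : a = r := hE.inj (le_antisymm (hr a) (by omega))
    subst this; exact D.refl _
  | succ n ih =>
    intro a hn
    by_cases e : a = r
    · subst e; exact D.refl _
    · have hlt : f a < f r := lt_of_le_of_ne (hr a) (fun h => e (hE.inj h))
      obtain ⟨u, hu, _⟩ := exists_up h2 hE hlt r (Ne.symm e)
      have hu2 := hu.2
      exact (ih u (by omega)).trans (D_of_up hE hu)

end

end LCT

/-- If `G` is an `n`-vertex 2-connected chordal graph, then
`lct(G) ≤ 4(1 + ⌊log₂ n⌋)`. -/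
theorem lct_le_of_twoConnected_chordal {V : Type} [Fintype V] (G : SimpleGraph V)
    (hchordal : IsChordal G) (h2 : TwoConnected G) :
    lct G ≤ 4 * (1 + Nat.log 2 (Fintype.card V)) := by
  classical
  have hcard : 2 < Nat.card V := h2.1
  have hne : Nonempty V := by
    by_contra h
    rw [not_nonempty_iff] at h
    simp at hcard
  obtain ⟨f, hf, hf2⟩ := LCT.exists_elim hchordal (Finset.univ : Finset V)
  have hE : LCT.Elim G f := ⟨fun a b h => hf (by simp) (by simp) h,
    fun v a b ha hb hab => hf2 v (by simp) a (by simp) b (by simp) ha.1 hb.1 ha.2 hb.2 hab⟩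
  obtain ⟨r, hr⟩ := Finite.exists_max f
  have hD := fun a => LCT.D_root h2 hE hr _ a le_rfl
  have hsz : LCT.sz G f r < 2 ^ (Nat.log 2 (Fintype.card V) + 1) := by
    refine lt_of_le_of_lt ?_ (Nat.lt_pow_succ_log_self (by omega) (Fintype.card V))
    rw [← Nat.card_eq_fintype_card]
    exact Set.ncard_le_card _
  obtain ⟨A, hA, hA2⟩ := LCT.main_ind h2 hE hr _ r (LCT.LC G) hsz (fun C hC => hC) (by
    intro C hC
    obtain ⟨a, ha, -⟩ := hC.1.exists_ne r
    exact ⟨a, ha, hD a⟩)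
  unfold lct
  refine le_trans (Nat.sInf_le (m := (A : Set V).ncard) ⟨(A : Set V), A.finite_toSet, rfl, ?_⟩) ?_
  · intro a c hc
    obtain ⟨h1, hlen, hmem⟩ := LCT.Cy.ofWalk hc.1
    obtain ⟨v, hv, hvc⟩ := hA2 c.support.tail ⟨h1, by
      intro l' hl'
      obtain ⟨d, q, hq, hql⟩ := hl'.toWalk
      have := hc.2 d q hq
      omega⟩
    exact ⟨v, by simpa using hv, hmem v hvc⟩
  · rw [Set.ncard_coe_finset]
    omega
end

section
/- If G is a connected n-vertex chordal graph, then lpt(G) ≤ (4(1 + ⌊log₂ n⌋) + 5)(1 + ⌊log₂ n⌋). -/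
open SimpleGraph

namespace LPT

/-- In a chordal graph there is no induced fan boundary: a vertex `h` joined to two
nonadjacent ends of a walk through a set `C` that `h` sees nothing of. -/
theorem no_bad {V : Type} {G : SimpleGraph V} (hc : IsChordal G) (C : Set V) (u v h : V)
    (p0 : G.Walk u v) (hp0 : ∀ x ∈ p0.support, x ∈ C ∨ x = u ∨ x = v)
    (hu : G.Adj h u) (hv : G.Adj v h) (hhC : h ∉ C) (hnC : ∀ x ∈ C, ¬ G.Adj h x)
    (huv : u ≠ v) (hnuv : ¬ G.Adj u v) : False := by
  classical
  have hex : ∃ n, ∃ p : G.Walk u v, p.length = n ∧ ∀ x ∈ p.support, x ∈ C ∨ x = u ∨ x = v :=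
    ⟨_, p0, rfl, hp0⟩
  obtain ⟨p1, hp1l, hp1s⟩ := Nat.find_spec hex
  have hmin : ∀ q : G.Walk u v, (∀ x ∈ q.support, x ∈ C ∨ x = u ∨ x = v) →
      p1.length ≤ q.length := by
    intro q hq
    rw [hp1l]
    exact Nat.find_min' hex ⟨q, rfl, hq⟩
  obtain ⟨p, hp, hps, hpmin⟩ : ∃ p : G.Walk u v, p.IsPath ∧
      (∀ x ∈ p.support, x ∈ C ∨ x = u ∨ x = v) ∧
      ∀ q : G.Walk u v, (∀ x ∈ q.support, x ∈ C ∨ x = u ∨ x = v) → p.length ≤ q.length :=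
    ⟨p1.bypass, p1.bypass_isPath, fun x hx => hp1s x (p1.support_bypass_subset hx),
      fun q hq => (p1.length_bypass_le).trans (hmin q hq)⟩
  have hhp : h ∉ p.support := by
    intro hx
    rcases hps h hx with h1 | h1 | h1
    · exact hhC h1
    · exact hu.ne h1
    · exact hv.ne h1.symm
  have hcyc : (Walk.cons hu (p.concat hv)).IsCycle := by
    rw [Walk.cons_isCycle_iff]
    refine ⟨hp.concat hhp hv, ?_⟩
    rw [Walk.edges_concat, List.concat_eq_append, List.mem_append]
    rintro (h1 | h1)
    · exact hhp (p.fst_mem_support_of_mem_edges h1)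
    · simp only [List.mem_singleton, Sym2.eq_iff] at h1
      rcases h1 with h1 | h1
      · exact hv.ne h1.1.symm
      · exact huv h1.2
  have hlen : 2 ≤ p.length := by
    by_contra hlt
    have : p.length = 0 ∨ p.length = 1 := by omega
    rcases this with h0 | h0
    · exact huv (Walk.eq_of_length_eq_zero h0)
    · exact hnuv (Walk.adj_of_length_eq_one h0)
  obtain ⟨a, b, ha, hb, hab, hne⟩ := hc h _ hcyc (by simp; omega)
  have key : ∀ i j, i < j → j ≤ p.length → G.Adj (p.getVert i) (p.getVert j) →
      s(p.getVert i, p.getVert j) ∈ p.edges := by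
    intro i j hij hj hadj
    by_cases h1 : j = i + 1
    · subst h1
      rw [Walk.mk_mem_edges_iff_exists]
      refine ⟨i, by omega, rfl⟩
    · exfalso
      have := hpmin ((p.take i).append (Walk.cons hadj (p.drop j))) (by
        intro x hx
        rw [Walk.mem_support_append_iff, Walk.support_cons, List.mem_cons] at hx
        rcases hx with hx | hx | hx
        · exact hps x ((p.isSubwalk_take _).support_subset hx)
        · exact hps x (hx ▸ p.getVert_mem_support i)
        · exact hps x ((p.isSubwalk_drop _).support_subset hx))
      simp [Walk.take_length, Walk.drop_length] at this
      omega
  have hh : ∀ b, b ∈ (Walk.cons hu (p.concat hv)).support → G.Adj h b →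
      s(h, b) ∈ (Walk.cons hu (p.concat hv)).edges := by
    intro b hb hhb
    simp only [Walk.support_cons, Walk.support_concat, List.concat_eq_append, List.mem_cons,
      List.mem_append, List.not_mem_nil, or_false] at hb
    have hbp : b ∈ p.support := by
      rcases hb with h1 | h1 | h1
      · exact absurd h1.symm hhb.ne
      · exact h1
      · exact absurd h1.symm hhb.ne
    rcases hps b hbp with h1 | h1 | h1
    · exact absurd hhb (hnC b h1)
    · subst h1; simp
    · subst h1; simp [Sym2.eq_swap]
  by_cases hah : a = h
  · subst hah; exact hne (hh b hb hab)
  by_cases hbh : b = h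
  · subst hbh; rw [Sym2.eq_swap] at hne; exact hne (hh a ha hab.symm)
  have hap : a ∈ p.support := by
    simpa [Walk.support_concat, hah] using ha
  have hbp : b ∈ p.support := by
    simpa [Walk.support_concat, hbh] using hb
  obtain ⟨i, rfl, hi⟩ := Walk.mem_support_iff_exists_getVert.1 hap
  obtain ⟨j, rfl, hj⟩ := Walk.mem_support_iff_exists_getVert.1 hbp
  have hne' : s(p.getVert i, p.getVert j) ∉ p.edges := by
    intro h1; apply hne; simp [Walk.edges_concat, h1]
  rcases lt_trichotomy i j with h1 | h1 | h1
  · exact hne' (key i j h1 hj hab)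
  · subst h1; exact hab.ne rfl
  · rw [Sym2.eq_swap] at hne'; exact hne' (key j i h1 hi hab.symm)

/-- `C` is connected inside itself. -/
def ConnIn {V : Type} (G : SimpleGraph V) (C : Finset V) : Prop :=
  ∀ a ∈ C, ∀ b ∈ C, ∃ p : G.Walk a b, ∀ x ∈ p.support, x ∈ C

/-- Every nonempty vertex set of a chordal graph has a simplicial vertex (Dirac). -/
theorem exists_simplicial {V : Type} [Fintype V] {G : SimpleGraph V} (hc : IsChordal G) :
    ∀ (n : ℕ) (S : Finset V), S.card = n → S.Nonempty →
      ∃ v ∈ S, ∀ u ∈ S, ∀ w ∈ S, G.Adj v u → G.Adj v w → u ≠ w → G.Adj u w := by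
  classical
  intro n
  induction n using Nat.strong_induction_on with
  | _ n ih =>
  intro S hS hne
  by_cases hcl : ∀ u ∈ S, ∀ w ∈ S, u ≠ w → G.Adj u w
  · obtain ⟨v, hv⟩ := hne
    exact ⟨v, hv, fun u hu w hw _ _ h => hcl u hu w hw h⟩
  push Not at hcl
  obtain ⟨u0, hu0, h0, hh0, hne0, hna0⟩ := hcl
  let good : Finset V → Prop := fun C => C ⊆ S ∧ C.Nonempty ∧ ConnIn G C ∧
    ∃ h ∈ S, h ∉ C ∧ ∀ x ∈ C, ¬ G.Adj h x
  have hg0 : good {u0} := by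
    refine ⟨by simpa using hu0, by simp, ?_, h0, hh0, by simpa using hne0.symm, ?_⟩
    · intro a ha b hb
      simp only [Finset.mem_singleton] at ha hb
      subst ha; subst hb
      exact ⟨Walk.nil, by simp⟩
    · intro x hx; simp only [Finset.mem_singleton] at hx; subst hx
      exact fun h => hna0 h.symm
  obtain ⟨C, hCmem, hCmax⟩ := Finset.exists_max_image (Finset.univ.filter good) Finset.card
    ⟨{u0}, by simp [hg0]⟩
  obtain ⟨hCS, hCne, hCc, h, hhS, hhC, hhn⟩ : good C := by simpa using hCmem
  have hN : ∀ v ∈ S, v ∉ C → (∃ x ∈ C, G.Adj v x) →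
      ∀ g ∈ S, g ∉ C → (∀ x ∈ C, ¬ G.Adj g x) → G.Adj g v := by
    intro v hvS hvC ⟨x, hxC, hvx⟩ g hgS hgC hgn
    by_contra hgv
    have hgne : g ≠ v := by rintro rfl; exact hgn x hxC hvx
    have hgood : good (insert v C) := by
      refine ⟨?_, by simp, ?_, g, hgS, by simp [hgne, hgC], ?_⟩
      · intro z hz; rcases Finset.mem_insert.1 hz with rfl | hz
        · exact hvS
        · exact hCS hz
      · have tov : ∀ a ∈ insert v C, ∃ p : G.Walk a x, ∀ z ∈ p.support, z ∈ insert v C := by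
          intro a ha
          rcases Finset.mem_insert.1 ha with rfl | ha
          · exact ⟨Walk.cons hvx Walk.nil, by simp [hxC]⟩
          · obtain ⟨p, hp⟩ := hCc a ha x hxC
            exact ⟨p, fun z hz => Finset.mem_insert_of_mem (hp z hz)⟩
        intro a ha b hb
        obtain ⟨p, hp⟩ := tov a ha
        obtain ⟨q, hq⟩ := tov b hb
        refine ⟨p.append q.reverse, fun z hz => ?_⟩
        rw [Walk.mem_support_append_iff, Walk.support_reverse, List.mem_reverse] at hz
        exact hz.elim (hp z) (hq z)
      · intro z hz; rcases Finset.mem_insert.1 hz with rfl | hz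
        · exact hgv
        · exact hgn z hz
    have := hCmax (insert v C) (by simpa using hgood)
    rw [Finset.card_insert_of_notMem hvC] at this
    omega
  let H := S.filter (fun g => g ∉ C ∧ ∀ x ∈ C, ¬ G.Adj g x)
  have hHlt : H.card < n := by
    rw [← hS]
    apply Finset.card_lt_card
    refine ⟨Finset.filter_subset _ _, fun hsub => ?_⟩
    obtain ⟨c, hcC⟩ := hCne
    exact (Finset.mem_filter.1 (hsub (hCS hcC))).2.1 hcC
  obtain ⟨v, hvH, hv⟩ := ih _ hHlt H rfl ⟨h, Finset.mem_filter.2 ⟨hhS, hhC, hhn⟩⟩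
  obtain ⟨hvS, hvC, hvn⟩ := Finset.mem_filter.1 hvH
  have cls : ∀ u ∈ S, G.Adj v u → u ∈ H ∨ (u ∉ C ∧ ∃ x ∈ C, G.Adj u x) := by
    intro u hu hvu
    have huC : u ∉ C := fun h1 => hvn u h1 hvu
    by_cases h1 : ∃ x ∈ C, G.Adj u x
    · exact Or.inr ⟨huC, h1⟩
    · push Not at h1
      exact Or.inl (Finset.mem_filter.2 ⟨hu, huC, h1⟩)
  refine ⟨v, hvS, fun u hu w hw hvu hvw huw => ?_⟩
  rcases cls u hu hvu with hu1 | ⟨hu1, hu2⟩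
  · rcases cls w hw hvw with hw1 | ⟨hw1, hw2⟩
    · exact hv u hu1 w hw1 hvu hvw huw
    · obtain ⟨_, a, b⟩ := Finset.mem_filter.1 hu1
      exact hN w hw hw1 hw2 u hu a b
  · rcases cls w hw hvw with hw1 | ⟨hw1, hw2⟩
    · obtain ⟨_, a, b⟩ := Finset.mem_filter.1 hw1
      exact (hN u hu hu1 hu2 w hw a b).symm
    · by_contra hnuw
      obtain ⟨x, hx, hux⟩ := hu2
      obtain ⟨y, hy, hwy⟩ := hw2
      obtain ⟨p, hp⟩ := hCc x hx y hy
      refine no_bad hc (C : Set V) u w v (Walk.cons hux (p.concat hwy.symm)) ?_ hvu hvw.symm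
        (by simpa using hvC) (by simpa using hvn) huw hnuw
      intro z hz
      simp only [Walk.support_cons, Walk.support_concat, List.concat_eq_append, List.mem_cons,
        List.mem_append, List.not_mem_nil, or_false] at hz
      rcases hz with h1 | h1 | h1
      · exact Or.inr (Or.inl h1)
      · exact Or.inl (hp z h1)
      · exact Or.inr (Or.inr h1)

/-- A chordal graph has a perfect elimination ordering, given by an injective rank. -/
theorem exists_peo {V : Type} [Fintype V] {G : SimpleGraph V} (hc : IsChordal G) :
    ∃ r : V → ℕ, Function.Injective r ∧ ∀ v u w, r v < r u → r v < r w →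
      G.Adj v u → G.Adj v w → u ≠ w → G.Adj u w := by
  classical
  have main : ∀ (n : ℕ) (S : Finset V), S.card = n → ∃ r : V → ℕ, Set.InjOn r S ∧
      ∀ v ∈ S, ∀ u ∈ S, ∀ w ∈ S, r v < r u → r v < r w →
      G.Adj v u → G.Adj v w → u ≠ w → G.Adj u w := by
    intro n
    induction n with
    | zero =>
      intro S hS
      rw [Finset.card_eq_zero] at hS
      subst hS
      exact ⟨fun _ => 0, by simp, by simp⟩
    | succ n ih =>
      intro S hS
      have hne : S.Nonempty := by rw [← Finset.card_pos]; omega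
      obtain ⟨s, hsS, hs⟩ := exists_simplicial hc _ S rfl hne
      obtain ⟨r, hr, hp⟩ := ih (S.erase s) (by rw [Finset.card_erase_of_mem hsS]; omega)
      refine ⟨fun x => if x = s then 0 else r x + 1, ?_, ?_⟩
      · intro x hx y hy hxy
        by_cases h1 : x = s <;> by_cases h2 : y = s
        · rw [h1, h2]
        · simp [h1, h2] at hxy
        · simp [h1, h2] at hxy
        · simp only [h1, h2, if_false, Nat.add_right_cancel_iff] at hxy
          refine hr ?_ ?_ hxy
          · simpa [h1] using hx
          · simpa [h2] using hy
      · intro v hv u hu w hw h1 h2 hvu hvw huw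
        by_cases hvs : v = s
        · subst hvs; exact hs u hu w hw hvu hvw huw
        · have hus : u ≠ s := by rintro rfl; simp at h1
          have hws : w ≠ s := by rintro rfl; simp at h2
          simp only [hvs, hus, hws, if_false, Nat.add_lt_add_iff_right] at h1 h2
          exact hp v (by simp [hvs, hv]) u (by simp [hus, hu]) w (by simp [hws, hw]) h1 h2
            hvu hvw huw
  obtain ⟨r, hr, hp⟩ := main _ Finset.univ rfl
  exact ⟨r, fun a b h => hr (by simp) (by simp) h,
    fun v u w => hp v (by simp) u (by simp) w (by simp)⟩

/-- The tree structure that comes out of a perfect elimination ordering: `D v` is the set of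
descendants of `v`, and the clique `K v` is the outer neighbourhood of `D v`. -/
structure TS {V : Type} (G : SimpleGraph V) where
  D : V → Finset V
  K : V → Finset V
  self : ∀ v, v ∈ D v
  nbr : ∀ v w u, w ∈ D v → u ∉ D v → G.Adj w u → u ∈ K v
  disj : ∀ v u, u ∈ K v → u ∉ D v
  adjK : ∀ v u, u ∈ K v → G.Adj v u
  cliqueK : ∀ v u w, u ∈ K v → w ∈ K v → u ≠ w → G.Adj u w
  trans : ∀ v w, w ∈ D v → D w ⊆ D v
  lam : ∀ z v w, z ∈ D v → z ∈ D w → v ∈ D w ∨ w ∈ D v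
  parent : ∀ x c, c ∈ D x → c ≠ x → ∃ y ∈ D x, c ∈ D y ∧ y ∉ D c ∧ y ∈ K c ∧
    ∀ u ∈ K c, u = y ∨ u ∈ K y
  root : ∃ t, ∀ w, w ∈ D t

theorem exists_TS {V : Type} [Fintype V] {G : SimpleGraph V} (hconn : G.Connected)
    (hc : IsChordal G) : Nonempty (TS G) := by
  classical
  obtain ⟨r, hr, hpeo⟩ := exists_peo hc
  let Up : V → V → Prop := fun v u => r v < r u ∧ G.Adj v u
  let Par : V → V → Prop := fun v u => Up v u ∧ ∀ w, Up v w → r u ≤ r w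
  have hParU : Relator.RightUnique Par := by
    intro a b c hb hc
    exact hr (le_antisymm (hb.2 c hc.1) (hc.2 b hb.1))
  have hParEx : ∀ v u, Up v u → ∃ y, Par v y := by
    intro v u hu
    obtain ⟨y, hy, hm⟩ := Finset.exists_min_image (Finset.univ.filter (Up v)) r
      ⟨u, by simp [hu]⟩
    exact ⟨y, by simpa using hy, fun w hw => hm w (by simpa using hw)⟩
  have hUpPar : ∀ v u y, Up v u → Par v y → u = y ∨ Up y u := by
    intro v u y hu hy
    by_cases h : u = y
    · exact Or.inl h
    · right
      have h1 := hy.2 u hu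
      have h2 : r y ≠ r u := fun h' => h (hr h').symm
      exact ⟨by omega, hpeo v y u hy.1.1 hu.1 hy.1.2 hu.2 (Ne.symm h)⟩
  let De : V → V → Prop := Relation.ReflTransGen Par
  have hle : ∀ w v, De w v → r w ≤ r v := by
    intro w v h
    induction h with
    | refl => exact le_rfl
    | tail _ h1 ih => exact ih.trans h1.1.1.le
  have hlow : ∀ n u w, r w - r u = n → Up u w → De u w := by
    intro n
    induction n using Nat.strong_induction_on with
    | _ n ih =>
    intro u w hn huw
    obtain ⟨y, hy⟩ := hParEx u w huw
    rcases hUpPar u w y huw hy with rfl | h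
    · exact Relation.ReflTransGen.single hy
    · have a1 := hy.1.1
      have a2 := h.1
      exact Relation.ReflTransGen.head hy (ih (r w - r y) (by omega) y w rfl h)
  have hnbr : ∀ v w u, De w v → ¬ De u v → G.Adj w u → Up v u := by
    intro v w u hwv
    induction hwv using Relation.ReflTransGen.head_induction_on with
    | refl =>
      intro hu hadj
      refine ⟨?_, hadj⟩
      by_contra hlt
      have : r u ≠ r v := fun h => hadj.ne (hr h).symm
      exact hu (hlow _ u v rfl ⟨by omega, hadj.symm⟩)
    | head hwc hcv ih =>
      rename_i w c
      intro hu hadj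
      have hne : r u ≠ r w := fun h => hadj.ne (hr h).symm
      by_cases hlt : r u < r w
      · exact absurd ((hlow _ u w rfl ⟨hlt, hadj.symm⟩).trans
          (Relation.ReflTransGen.head hwc hcv)) hu
      · rcases hUpPar w u c ⟨by omega, hadj⟩ hwc with rfl | h
        · exact absurd hcv hu
        · exact ih hu h.2
  have hroot : ∃ t, ∀ w, De w t := by
    haveI := hconn.nonempty
    obtain ⟨t, -, ht⟩ := Finset.exists_max_image (Finset.univ : Finset V) r
      Finset.univ_nonempty
    refine ⟨t, fun w => ?_⟩
    by_contra hw
    obtain ⟨p⟩ := hconn.preconnected t w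
    obtain ⟨d, -, h1, h2⟩ := p.exists_boundary_dart {z | De z t} Relation.ReflTransGen.refl hw
    have := (hnbr t d.fst d.snd h1 h2 d.adj).1
    have := ht d.snd (Finset.mem_univ _)
    omega
  refine ⟨{ D := fun v => Finset.univ.filter (fun w => De w v)
            K := fun v => Finset.univ.filter (Up v)
            self := ?_, nbr := ?_, disj := ?_, adjK := ?_, cliqueK := ?_, trans := ?_,
            lam := ?_, parent := ?_, root := ?_ }⟩
  · intro v; simpa using Relation.ReflTransGen.refl
  · intro v w u h1 h2 h3
    simp only [Finset.mem_filter, Finset.mem_univ, true_and] at *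
    exact hnbr v w u h1 h2 h3
  · intro v u h1 h2
    simp only [Finset.mem_filter, Finset.mem_univ, true_and] at *
    have := hle _ _ h2
    have := h1.1
    omega
  · intro v u h1
    simp only [Finset.mem_filter, Finset.mem_univ, true_and] at *
    exact h1.2
  · intro v u w h1 h2 h3
    simp only [Finset.mem_filter, Finset.mem_univ, true_and] at *
    exact hpeo v u w h1.1 h2.1 h1.2 h2.2 h3
  · intro v w h1 z hz
    simp only [Finset.mem_filter, Finset.mem_univ, true_and] at *
    exact hz.trans h1
  · intro z v w h1 h2
    simp only [Finset.mem_filter, Finset.mem_univ, true_and] at *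
    exact Relation.ReflTransGen.total_of_right_unique hParU h1 h2
  · intro x c h1 h2
    simp only [Finset.mem_filter, Finset.mem_univ, true_and] at *
    rcases Relation.ReflTransGen.cases_head h1 with h | ⟨y, hy, hyx⟩
    · exact absurd h h2
    · refine ⟨y, hyx, Relation.ReflTransGen.single hy, ?_, hy.1, fun u hu => hUpPar c u y hu hy⟩
      intro h
      have := hle _ _ h
      have := hy.1.1
      omega
  · simpa using hroot

/-- Paths as lists of vertices. -/
def Pth {V : Type} (G : SimpleGraph V) (l : List V) : Prop := l.IsChain G.Adj ∧ l.Nodup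

/-- Longest paths as lists of vertices. -/
def LP {V : Type} (G : SimpleGraph V) (l : List V) : Prop :=
  Pth G l ∧ ∀ l', Pth G l' → l'.length ≤ l.length

/-- Some end of the path lies in `S`. -/
def EndIn {V : Type} (l : List V) (S : Finset V) : Prop :=
  (∃ v t, l = v :: t ∧ v ∈ S) ∨ (∃ t v, l = t ++ [v] ∧ v ∈ S)

theorem Pth.reverse {V : Type} {G : SimpleGraph V} {l : List V} (h : Pth G l) :
    Pth G l.reverse := by
  refine ⟨?_, List.nodup_reverse.2 h.2⟩
  rw [List.isChain_reverse]
  exact h.1.imp fun a b h => h.symm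

theorem LP.reverse {V : Type} {G : SimpleGraph V} {l : List V} (h : LP G l) :
    LP G l.reverse :=
  ⟨h.1.reverse, fun l' hl' => by simpa using h.2 l' hl'⟩

theorem exists_max {α : Type} (p : α → Prop) (f : α → ℕ) (N : ℕ) (hN : ∀ a, p a → f a ≤ N)
    (hne : ∃ a, p a) : ∃ a, p a ∧ ∀ b, p b → f b ≤ f a := by
  classical
  obtain ⟨a0, ha0⟩ := hne
  have h := Nat.findGreatest_spec (P := fun n => ∃ a, p a ∧ f a = n) (hN a0 ha0) ⟨a0, ha0, rfl⟩
  obtain ⟨a, ha, hfa⟩ := h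
  refine ⟨a, ha, fun b hb => ?_⟩
  rw [hfa]
  exact Nat.le_findGreatest (hN b hb) ⟨b, hb, rfl⟩

/-- Split a list at the last element violating `p`. -/
theorem split_last {α : Type} (p : α → Prop) : ∀ (l : List α), (∃ x ∈ l, ¬ p x) →
    ∃ l1 u l2, l = l1 ++ u :: l2 ∧ ¬ p u ∧ ∀ x ∈ l2, p x := by
  intro l
  induction l with
  | nil => rintro ⟨x, hx, -⟩; simp at hx
  | cons a t ih =>
    intro h
    by_cases ht : ∃ x ∈ t, ¬ p x
    · obtain ⟨l1, u, l2, h1, h2, h3⟩ := ih ht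
      exact ⟨a :: l1, u, l2, by simp [h1], h2, h3⟩
    · push Not at ht
      obtain ⟨x, hx, hpx⟩ := h
      rcases List.mem_cons.1 hx with rfl | hx
      · exact ⟨[], x, t, by simp, hpx, ht⟩
      · exact absurd (ht x hx) hpx

/-- Split a list at the first element violating `p`. -/
theorem split_first {α : Type} (p : α → Prop) (l : List α) (h : ∃ x ∈ l, ¬ p x) :
    ∃ l1 u l2, l = l1 ++ u :: l2 ∧ ¬ p u ∧ ∀ x ∈ l1, p x := by
  obtain ⟨l1, u, l2, h1, h2, h3⟩ := split_last p l.reverse (by simpa using h)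
  refine ⟨l2.reverse, u, l1.reverse, ?_, h2, by simpa using h3⟩
  have := congrArg List.reverse h1
  simpa using this

/-- A path meeting `S` and its complement crosses. -/
theorem crossing {V : Type} {G : SimpleGraph V} (S : Finset V) : ∀ (l : List V),
    l.IsChain G.Adj → (∃ x ∈ l, x ∈ S) → (∃ x ∈ l, x ∉ S) →
    ∃ w u, w ∈ S ∧ u ∉ S ∧ ((∃ l1 l2, l = l1 ++ w :: u :: l2) ∨ ∃ l1 l2, l = l1 ++ u :: w :: l2) := by
  intro l
  induction l with
  | nil => rintro - ⟨x, hx, -⟩; simp at hx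
  | cons a t ih =>
    intro hch h1 h2
    cases t with
    | nil =>
      obtain ⟨x, hx, hxS⟩ := h1
      obtain ⟨y, hy, hyS⟩ := h2
      simp only [List.mem_singleton] at hx hy
      subst hx; subst hy; exact absurd hxS hyS
    | cons b t =>
      by_cases ha : a ∈ S <;> by_cases hb : b ∈ S
      · obtain ⟨y, hy, hyS⟩ := h2
        have : ∃ x ∈ b :: t, x ∉ S := by
          rcases List.mem_cons.1 hy with rfl | hy
          · exact absurd ha hyS
          · exact ⟨y, hy, hyS⟩
        obtain ⟨w, u, hw, hu, h⟩ := ih (List.isChain_cons_cons.1 hch).2 ⟨b, by simp, hb⟩ this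
        refine ⟨w, u, hw, hu, ?_⟩
        rcases h with ⟨l1, l2, h⟩ | ⟨l1, l2, h⟩
        · exact Or.inl ⟨a :: l1, l2, by simp [h]⟩
        · exact Or.inr ⟨a :: l1, l2, by simp [h]⟩
      · exact ⟨a, b, ha, hb, Or.inl ⟨[], t, rfl⟩⟩
      · exact ⟨b, a, hb, ha, Or.inr ⟨[], t, rfl⟩⟩
      · obtain ⟨y, hy, hyS⟩ := h1
        have : ∃ x ∈ b :: t, x ∈ S := by
          rcases List.mem_cons.1 hy with rfl | hy
          · exact absurd hyS ha
          · exact ⟨y, hy, hyS⟩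
        obtain ⟨w, u, hw, hu, h⟩ := ih (List.isChain_cons_cons.1 hch).2 this ⟨b, by simp, hb⟩
        refine ⟨w, u, hw, hu, ?_⟩
        rcases h with ⟨l1, l2, h⟩ | ⟨l1, l2, h⟩
        · exact Or.inl ⟨a :: l1, l2, by simp [h]⟩
        · exact Or.inr ⟨a :: l1, l2, by simp [h]⟩

theorem Pth.length_le {V : Type} [Fintype V] {G : SimpleGraph V} {l : List V} (h : Pth G l) :
    l.length ≤ Fintype.card V := h.2.length_le_card

/-- A longest path has no two consecutive vertices adjacent to a vertex off the path. -/
theorem LP.no_insert {V : Type} {G : SimpleGraph V} {l l1 l2 : List V} {u v b : V} (h : LP G l)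
    (hl : l = l1 ++ u :: v :: l2) (hb : b ∉ l) (hu : G.Adj u b) (hv : G.Adj b v) : False := by
  subst hl
  have h1 := h.1.1
  have h2 := h.1.2
  have := h.2 (l1 ++ u :: b :: v :: l2) ⟨by
    rw [List.isChain_append_cons_cons] at h1 ⊢
    exact ⟨h1.1, hu, List.isChain_cons_cons.2 ⟨hv, h1.2.2⟩⟩, by
    simp only [List.mem_append, List.mem_cons, not_or] at hb
    grind⟩
  simp at this

theorem LP.no_extend {V : Type} {G : SimpleGraph V} {l l1 : List V} {u b : V} (h : LP G l)
    (hl : l = l1 ++ [u]) (hb : b ∉ l) (hu : G.Adj u b) : False := by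
  subst hl
  have h1 := h.1.1
  have h2 := h.1.2
  have := h.2 (l1 ++ u :: b :: []) ⟨by
    rw [List.isChain_append_cons_cons]
    exact ⟨h1, hu, by simp⟩, by
    simp only [List.mem_append, List.mem_cons, not_or] at hb
    grind⟩
  simp at this

/-- In a connected graph, two longest paths intersect. -/
theorem LP.inter {V : Type} {G : SimpleGraph V} (hconn : G.Connected)
    {l m : List V} (hl : LP G l) (hm : LP G m) : ∃ x ∈ l, x ∈ m := by
  classical
  by_contra hdis
  push Not at hdis
  have hlen : l.length = m.length := le_antisymm (hm.2 l hl.1) (hl.2 m hm.1)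
  have hpos : 1 ≤ l.length := by
    haveI := hconn.nonempty
    exact hl.2 [Classical.arbitrary V] ⟨by simp, by simp⟩
  obtain ⟨x0, hx0⟩ := List.exists_mem_of_length_pos hpos
  obtain ⟨y0, hy0⟩ := List.exists_mem_of_length_pos (hlen ▸ hpos : 1 ≤ m.length)
  -- a shortest connecting walk
  let good : ℕ → Prop := fun n => ∃ x ∈ l, ∃ y ∈ m, ∃ p : G.Walk x y, p.IsPath ∧ p.length = n
  have hex : ∃ n, good n := by
    obtain ⟨p⟩ := hconn.preconnected x0 y0
    exact ⟨_, x0, hx0, y0, hy0, p.bypass, p.bypass_isPath, rfl⟩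
  obtain ⟨x, hx, y, hy, p, hp, hpl⟩ := Nat.find_spec hex
  have hmin : ∀ x ∈ l, ∀ y ∈ m, ∀ q : G.Walk x y, q.IsPath → p.length ≤ q.length := by
    intro x hx y hy q hq
    rw [hpl]; exact Nat.find_min' hex ⟨x, hx, y, hy, q, hq, rfl⟩
  have hxl : ∀ z ∈ p.support, z ∈ l → z = x := by
    intro z hz hzl
    have h1 := hmin z hzl y hy (p.dropUntil z hz) (hp.dropUntil hz)
    have h2 := congrArg Walk.length (p.take_spec hz)
    rw [Walk.length_append] at h2
    exact (Walk.eq_of_length_eq_zero (p := p.takeUntil z hz) (by omega)).symm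
  have hym : ∀ z ∈ p.support, z ∈ m → z = y := by
    intro z hz hzm
    have h1 := hmin x hx z hzm (p.takeUntil z hz) (hp.takeUntil hz)
    have h2 := congrArg Walk.length (p.take_spec hz)
    rw [Walk.length_append] at h2
    exact (Walk.eq_of_length_eq_zero (p := p.dropUntil z hz) (by omega))
  have hxy : x ≠ y := by rintro rfl; exact hdis x hx hy
  -- halves
  have half : ∀ (k : List V), Pth G k → ∀ z ∈ k, ∃ k1, Pth G (k1 ++ [z]) ∧ (∀ t ∈ k1, t ∈ k) ∧
      k.length ≤ 2 * k1.length + 1 := by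
    intro k hk z hz
    obtain ⟨s, t, rfl⟩ := List.append_of_mem hz
    by_cases hst : t.length ≤ s.length
    · refine ⟨s, ⟨(List.isChain_split.1 hk.1).1, ?_⟩, by simp +contextual, by simp; omega⟩
      have := hk.2
      grind
    · refine ⟨t.reverse, ?_, by simp +contextual, by simp; omega⟩
      have : Pth G (z :: t) := ⟨(List.isChain_split.1 hk.1).2, by have := hk.2; grind⟩
      simpa using this.reverse
  obtain ⟨k1, hk1, hk1l, hk1n⟩ := half l hl.1 x hx
  obtain ⟨k2, hk2, hk2m, hk2n⟩ := half m hm.1 y hy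
  obtain ⟨q, hq⟩ : ∃ q, p.support = x :: q := ⟨_, p.support_eq_cons⟩
  have hqn : q ≠ [] := by
    rintro rfl
    have := p.end_mem_support
    rw [hq] at this
    simp at this; exact hxy this.symm
  obtain ⟨q', hq'⟩ : ∃ q', q = q' ++ [y] := by
    refine ⟨q.dropLast, ?_⟩
    have h1 : q.getLast hqn = y := by
      have := p.getLast_support
      simp only [hq] at this
      rw [List.getLast_cons hqn] at this
      exact this
    rw [← h1, List.dropLast_append_getLast]
  have hps : p.support = x :: (q' ++ [y]) := by rw [hq, hq']
  have hch := p.isChain_adj_support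
  have hnd := hp.support_nodup
  rw [hps] at hch hnd
  have := hl.2 (k1 ++ x :: (q' ++ y :: k2.reverse)) ⟨?_, ?_⟩
  · simp at this; omega
  · rw [List.isChain_split]
    refine ⟨hk1.1, ?_⟩
    rw [← List.cons_append, List.isChain_split]
    refine ⟨by simpa using hch, ?_⟩
    simpa using hk2.reverse.1
  · have a1 := hk1.2
    have a2 := hk2.2
    have b1 : ∀ z ∈ x :: (q' ++ [y]), z ∈ l → z = x := by rw [← hps]; exact hxl
    have b2 : ∀ z ∈ x :: (q' ++ [y]), z ∈ m → z = y := by rw [← hps]; exact hym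
    simp only [List.nodup_append, List.nodup_cons, List.mem_append, List.mem_cons,
      List.nodup_reverse, List.mem_reverse, List.not_mem_nil, or_false, not_or] at *
    grind

theorem rep_mid {V : Type} {G : SimpleGraph V} {l1 l2 s m : List V} {u v p q : V}
    (h : LP G (l1 ++ u :: (s ++ v :: l2))) (hM : Pth G (p :: (m ++ [q])))
    (hu : G.Adj u p) (hv : G.Adj q v)
    (hd : ∀ z ∈ p :: (m ++ [q]), z ∉ l1 ∧ z ≠ u ∧ z ≠ v ∧ z ∉ l2) :
    m.length + 2 ≤ s.length := by
  have h1 := h.1.1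
  have h2 := h.1.2
  rw [List.isChain_split, ← List.cons_append (a := u) (as := s), List.isChain_split (l₁ := u :: s)] at h1
  have := h.2 (l1 ++ u :: (p :: (m ++ q :: v :: l2))) ⟨by
    rw [List.isChain_append_cons_cons]
    refine ⟨h1.1, hu, ?_⟩
    rw [← List.cons_append, List.isChain_append_cons_cons]
    exact ⟨hM.1, hv, h1.2.2⟩, by
    have h3 := hM.2
    simp only [List.nodup_append, List.nodup_cons, List.mem_append, List.mem_cons,
      List.not_mem_nil, or_false, not_or] at *
    grind⟩
  simp at this
  omega

theorem rep_end {V : Type} {G : SimpleGraph V} {l1 s m : List V} {u p : V}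
    (h : LP G (l1 ++ u :: s)) (hM : Pth G (p :: m))
    (hu : G.Adj u p)
    (hd : ∀ z ∈ p :: m, z ∉ l1 ∧ z ≠ u) :
    m.length + 1 ≤ s.length := by
  have h1 := h.1.1
  have h2 := h.1.2
  rw [List.isChain_split] at h1
  have := h.2 (l1 ++ u :: (p :: m)) ⟨by
    rw [List.isChain_append_cons_cons]
    exact ⟨h1.1, hu, hM.1⟩, by
    have h3 := hM.2
    simp only [List.nodup_append, List.nodup_cons, List.mem_append, List.mem_cons] at *
    grind⟩
  simp at this
  omega

/-- The light children hanging off the heavy chain below `x`. -/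
structure Light {V : Type} {G : SimpleGraph V} (T : TS G) (x b b' c : V) : Prop where
  mem : c ∈ T.D x
  card : 2 * (T.D c).card ≤ (T.D x).card
  nb : b ∉ T.D c
  nb' : b' ∉ T.D c
  par : ∃ y, y ∈ T.K c
  adj : ∀ u ∈ T.K c, u = b ∨ G.Adj u b
  adj' : ∀ u ∈ T.K c, u = b' ∨ G.Adj u b'

theorem setup {V : Type} [Fintype V] {G : SimpleGraph V} (T : TS G) (x : V) :
    (∃ a, ∀ l, LP G l → (∃ z ∈ l, z ∈ T.D x) → (∃ z ∈ l, z ∉ T.D x) → a ∈ l) ∨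
    ∃ b b', b ≠ b' ∧ ∀ l, LP G l → (∃ z ∈ l, z ∈ T.D x) → (∃ z ∈ l, z ∉ T.D x) → b ∉ l → b' ∉ l →
      ∃ c, Light T x b b' c ∧ ∃ z ∈ l, z ∈ T.D c := by
  classical
  -- crossing
  have hcr : ∀ l, LP G l → (∃ z ∈ l, z ∈ T.D x) → (∃ z ∈ l, z ∉ T.D x) →
      ∃ w u, w ∈ T.D x ∧ u ∈ T.K x ∧ G.Adj w u ∧
      ((∃ l1 l2, l = l1 ++ w :: u :: l2) ∨ ∃ l1 l2, l = l1 ++ u :: w :: l2) := by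
    intro l hl h1 h2
    obtain ⟨w, u, hw, hu, h⟩ := crossing (T.D x) l hl.1.1 h1 h2
    have hadj : G.Adj w u := by
      have hch := hl.1.1
      rcases h with ⟨l1, l2, rfl⟩ | ⟨l1, l2, rfl⟩
      · exact (List.isChain_append_cons_cons.1 hch).2.1
      · exact (List.isChain_append_cons_cons.1 hch).2.1.symm
    exact ⟨w, u, hw, T.nbr x w u hw hu hadj, hadj, h⟩
  by_cases hK : (T.K x).card ≤ 1
  · left
    have hK' := Finset.card_le_one.1 hK
    by_cases hne : ∃ a, a ∈ T.K x
    · obtain ⟨a, ha⟩ := hne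
      refine ⟨a, fun l hl h1 h2 => ?_⟩
      obtain ⟨w, u, hw, hu, -, h⟩ := hcr l hl h1 h2
      rw [hK' a ha u hu]
      rcases h with ⟨l1, l2, rfl⟩ | ⟨l1, l2, rfl⟩ <;> simp
    · refine ⟨x, fun l hl h1 h2 => ?_⟩
      obtain ⟨w, u, hw, hu, -⟩ := hcr l hl h1 h2
      exact absurd ⟨u, hu⟩ hne
  right
  push Not at hK
  let Q : Finset V := (T.D x).filter fun y => (T.D x).card < 2 * (T.D y).card
  let Qu : V → Finset V := fun u => Q.filter fun y => u ∈ T.K y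
  have hQ : ∀ y, y ∈ Q ↔ y ∈ T.D x ∧ (T.D x).card < 2 * (T.D y).card := by simp [Q]
  have hQu : ∀ u y, y ∈ Qu u ↔ y ∈ Q ∧ u ∈ T.K y := by simp [Qu]
  have hchain : ∀ y ∈ Q, ∀ y' ∈ Q, y ∈ T.D y' ∨ y' ∈ T.D y := by
    intro y hy y' hy'
    have h1 := (hQ y).1 hy
    have h2 := (hQ y').1 hy'
    have : ((T.D y) ∩ (T.D y')).Nonempty := by
      rw [← Finset.card_pos]
      have h3 := Finset.card_union_add_card_inter (T.D y) (T.D y')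
      have h4 := Finset.card_le_card (Finset.union_subset (T.trans x y h1.1) (T.trans x y' h2.1))
      omega
    obtain ⟨z, hz⟩ := this
    rw [Finset.mem_inter] at hz
    exact T.lam z y y' hz.1 hz.2
  have hup' : ∀ u ∈ T.K x, ∀ y y', u ∈ T.K y → y ∈ T.D y' → y' ∈ T.D x → u ∈ T.K y' := by
    intro u hu y y' h1 h2 h3
    exact T.nbr y' y u h2 (fun h => T.disj x u hu (T.trans x y' h3 h)) (T.adjK y u h1)
  have hnest : ∀ u ∈ T.K x, ∀ v ∈ T.K x, (Qu u).card ≤ (Qu v).card → Qu u ⊆ Qu v := by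
    intro u hu v hv hcard
    by_contra hns
    obtain ⟨y, hy, hyv⟩ := Finset.not_subset.1 hns
    have hy1 := (hQu u y).1 hy
    have : Qu v ⊂ Qu u := by
      rw [Finset.ssubset_iff_of_subset]
      · exact ⟨y, hy, hyv⟩
      intro y' hy'
      have hy'1 := (hQu v y').1 hy'
      rw [hQu]
      refine ⟨hy'1.1, ?_⟩
      rcases hchain y hy1.1 y' hy'1.1 with h | h
      · exact hup' u hu y y' hy1.2 h ((hQ y').1 hy'1.1).1
      · exact absurd ((hQu v y).2 ⟨hy1.1, hup' v hv y' y hy'1.2 h ((hQ y).1 hy1.1).1⟩) hyv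
    have := Finset.card_lt_card this
    omega
  obtain ⟨b, hb, hbm⟩ := Finset.exists_max_image (T.K x) (fun u => (Qu u).card)
    (Finset.card_pos.1 (by omega))
  obtain ⟨b', hb', hbm'⟩ := Finset.exists_max_image ((T.K x).erase b) (fun u => (Qu u).card)
    (Finset.card_pos.1 (by rw [Finset.card_erase_of_mem hb]; omega))
  rw [Finset.mem_erase] at hb'
  refine ⟨b, b', hb'.1.symm, fun l hl h1 h2 hbl hbl' => ?_⟩
  obtain ⟨w, u, hw, hu, hadj, h⟩ := hcr l hl h1 h2
  have hul : u ∈ l := by rcases h with ⟨l1, l2, rfl⟩ | ⟨l1, l2, rfl⟩ <;> simp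
  have hwl : w ∈ l := by rcases h with ⟨l1, l2, rfl⟩ | ⟨l1, l2, rfl⟩ <;> simp
  have hub : u ≠ b := by rintro rfl; exact hbl hul
  have hub' : u ≠ b' := by rintro rfl; exact hbl' hul
  have hsub := hnest u hu b hb (hbm u hu)
  have hsub' := hnest u hu b' hb'.2 (hbm' u (Finset.mem_erase.2 ⟨hub, hu⟩))
  by_cases hwQ : w ∈ Q
  · exfalso
    have hwu : w ∈ Qu u := (hQu u w).2 ⟨hwQ, T.nbr w w u (T.self w)
      (fun h => T.disj x u hu (T.trans x w hw h)) hadj⟩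
    have hwb := T.adjK w b ((hQu b w).1 (hsub hwu)).2
    have hbu := T.cliqueK x u b hu hb hub
    rcases h with ⟨l1, l2, hl'⟩ | ⟨l1, l2, hl'⟩
    · exact hl.no_insert hl' hbl hwb hbu.symm
    · exact hl.no_insert hl' hbl hbu hwb.symm
  · obtain ⟨c, hc, hcm⟩ := Finset.exists_max_image
      ((T.D x).filter fun c => w ∈ T.D c ∧ c ∉ Q) (fun c => (T.D c).card)
      ⟨w, by simp [hw, T.self, hwQ]⟩
    simp only [Finset.mem_filter] at hc hcm
    have hxQ : x ∈ Q := by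
      have : 0 < (T.D x).card := Finset.card_pos.2 ⟨x, T.self x⟩
      exact (hQ x).2 ⟨T.self x, by omega⟩
    have hcx : c ≠ x := by rintro rfl; exact hc.2.2 hxQ
    obtain ⟨y, hyx, hcy, hyc, hyK, hKy⟩ := T.parent x c hc.1 hcx
    have hyQ : y ∈ Q := by
      by_contra hyQ
      have h3 := hcm y ⟨hyx, T.trans y c hcy hc.2.1, hyQ⟩
      have h4 : T.D c ⊂ T.D y := by
        rw [Finset.ssubset_iff_of_subset (T.trans y c hcy)]
        exact ⟨y, T.self y, hyc⟩
      have := Finset.card_lt_card h4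
      omega
    have huy : u ∈ T.K y := T.nbr y w u (T.trans y c hcy hc.2.1)
      (fun h => T.disj x u hu (T.trans x y hyx h)) hadj
    have hyu : y ∈ Qu u := (hQu u y).2 ⟨hyQ, huy⟩
    have hby := ((hQu b y).1 (hsub hyu)).2
    have hby' := ((hQu b' y).1 (hsub' hyu)).2
    refine ⟨c, ⟨hc.1, ?_, ?_, ?_, ⟨y, hyK⟩, ?_, ?_⟩, w, hwl, hc.2.1⟩
    · have := mt (hQ c).2 hc.2.2
      by_contra h5
      exact this ⟨hc.1, by omega⟩
    · exact fun h => T.disj y b hby (T.trans y c hcy h)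
    · exact fun h => T.disj y b' hby' (T.trans y c hcy h)
    · intro v hv
      by_cases hvb : v = b
      · exact Or.inl hvb
      right
      rcases hKy v hv with rfl | hv
      · exact T.adjK _ b hby
      · exact T.cliqueK y v b hv hby hvb
    · intro v hv
      by_cases hvb : v = b'
      · exact Or.inl hvb
      right
      rcases hKy v hv with rfl | hv
      · exact T.adjK _ b' hby'
      · exact T.cliqueK y v b' hv hby' hvb

theorem ends {V : Type} [Fintype V] {G : SimpleGraph V} (T : TS G) {x b b' c0 : V}
    (h0 : Light T x b b' c0) :
    ∃ a c1, Light T x b b' c1 ∧ ∀ l, LP G l → b ∉ l → a ∉ l → (∃ z ∈ l, z ∉ T.D x) →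
      ∀ c, Light T x b b' c → EndIn l (T.D c) → ∃ z ∈ l, z ∈ T.D c1 := by
  classical
  obtain ⟨y, hy⟩ := h0.par
  obtain ⟨⟨a, c1, p, m⟩, ⟨hL, ha, hP, hD, hadj⟩, hmax⟩ :=
    exists_max (α := V × V × V × List V)
      (fun q => Light T x b b' q.2.1 ∧ q.1 ∈ T.K q.2.1 ∧ Pth G (q.2.2.1 :: q.2.2.2) ∧
        (∀ z ∈ q.2.2.1 :: q.2.2.2, z ∈ T.D q.2.1) ∧ G.Adj q.1 q.2.2.1)
      (fun q => q.2.2.2.length) (Fintype.card V)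
      (fun q hq => by have := hq.2.2.1.length_le; simp at this; omega)
      ⟨(y, c0, c0, []), h0, hy, ⟨by simp, by simp⟩, by simp [T.self],
        (T.adjK c0 y hy).symm⟩
  dsimp only at hL ha hP hD hadj hmax
  refine ⟨a, c1, hL, ?_⟩
  have key : ∀ l, LP G l → b ∉ l → a ∉ l → (∃ z ∈ l, z ∉ T.D x) →
      ∀ c, Light T x b b' c → (∃ t v, l = t ++ [v] ∧ v ∈ T.D c) → ∃ z ∈ l, z ∈ T.D c1 := by
    rintro l hl hb hal ⟨z, hz, hzx⟩ c hc ⟨t, v, htv, hv⟩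
    obtain ⟨l1, u, s, hlu, huc, hs⟩ := split_last (fun w => w ∈ T.D c) l
      ⟨z, hz, fun h => hzx (T.trans x c hc.mem h)⟩
    by_contra hno
    push Not at hno
    cases s with
    | nil =>
      rw [htv] at hlu
      have := (List.append_inj' hlu rfl).2
      simp at this
      subst this
      exact huc hv
    | cons w s =>
      subst hlu
      have hch := hl.1.1
      have huw := (List.isChain_append_cons_cons.1 hch).2
      have hnd := hl.1.2
      have huK : u ∈ T.K c := T.nbr c w u (hs w (by simp)) huc huw.1.symm
      have h1 := hmax (u, c, w, s) ⟨hc, huK, ⟨huw.2, by grind⟩, hs, huw.1⟩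
      dsimp only at h1
      have hub : G.Adj u b := (hc.adj u huK).resolve_left (by rintro rfl; simp at hb)
      have ham : ∀ z ∈ p :: m, z ≠ a := by
        rintro z hz rfl
        exact T.disj c1 z ha (hD z hz)
      have hbm : ∀ z ∈ p :: m, z ≠ b := by
        rintro z hz rfl
        exact hL.nb (hD z hz)
      have hnd' := hP.2
      have hlm : ∀ z ∈ p :: m, z ∉ l1 ++ u :: w :: s := fun z hz h => hno z h (hD z hz)
      rcases hL.adj a ha with rfl | hab
      · have := rep_end (m := p :: m) hl ⟨List.isChain_cons_cons.2 ⟨hadj, hP.1⟩, by grind⟩ hub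
          (by grind)
        simp at this
        omega
      · have := rep_end (m := a :: p :: m) hl ⟨List.isChain_cons_cons.2 ⟨hab.symm,
          List.isChain_cons_cons.2 ⟨hadj, hP.1⟩⟩, by
            have := hab.ne
            grind⟩ hub (by grind)
        simp at this
        omega
  rintro l hl hb hal hx c hc (⟨v, t, rfl, hv⟩ | h)
  · obtain ⟨z, hz, h⟩ := key _ hl.reverse (by rwa [List.mem_reverse])
      (by rwa [List.mem_reverse]) (by simpa only [List.mem_reverse] using hx)
      c hc ⟨t.reverse, v, by simp, hv⟩
    exact ⟨z, List.mem_reverse.1 hz, h⟩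
  · exact key l hl hb hal hx c hc h

theorem Pth.cons {V : Type} {G : SimpleGraph V} {l : List V} {a b : V} (h : Pth G (a :: l))
    (hab : G.Adj b a) (hb : b ∉ a :: l) : Pth G (b :: a :: l) :=
  ⟨List.isChain_cons_cons.2 ⟨hab, h.1⟩, List.nodup_cons.2 ⟨hb, h.2⟩⟩

theorem Pth.concat {V : Type} {G : SimpleGraph V} {l : List V} {a b : V} (h : Pth G (l ++ [a]))
    (hab : G.Adj a b) (hb : b ∉ l ++ [a]) : Pth G (l ++ [a] ++ [b]) := by
  refine ⟨?_, ?_⟩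
  · rw [List.append_assoc]
    exact List.isChain_append_cons_cons.2 ⟨h.1, hab, by simp⟩
  · have := h.2
    grind

theorem midpath {V : Type} {G : SimpleGraph V} {m : List V} {b b' a a' : V}
    (hP : Pth G (a :: (m ++ [a']))) (hbb : b ≠ b') (hb : b ∉ m) (hb' : b' ∉ m)
    (h1 : a = b ∨ G.Adj a b) (h2 : a = b' ∨ G.Adj a b')
    (h3 : a' = b ∨ G.Adj a' b) (h4 : a' = b' ∨ G.Adj a' b') :
    ∃ p n q, Pth G (p :: (n ++ [q])) ∧ (p = b ∧ q = b' ∨ p = b' ∧ q = b) ∧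
      m.length ≤ n.length ∧
      ∀ z ∈ p :: (n ++ [q]), z = b ∨ z = b' ∨ z = a ∨ z = a' ∨ z ∈ m := by
  classical
  have hnd := hP.2
  have haa : a ≠ a' := by rintro rfl; simp at hnd
  -- extension at the back
  have back : ∀ e f, e ≠ f → f ∉ m → Pth G (a :: (m ++ [a'])) → a = e → (a' = f ∨ G.Adj a' f) →
      ∃ n, Pth G (e :: (n ++ [f])) ∧ m.length ≤ n.length ∧ ∀ z ∈ n, z ∈ m ∨ z = a' := by
    rintro e f hef hf hP rfl (rfl | h)
    · exact ⟨m, hP, le_rfl, fun z hz => Or.inl hz⟩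
    · refine ⟨m ++ [a'], ?_, by simp, by simp⟩
      have := Pth.concat (l := a :: m) hP h (by have := h.ne; grind)
      simpa using this
  by_cases e1 : a = b
  · obtain ⟨n, hn, hl, hz⟩ := back b b' hbb hb' hP e1 h4
    exact ⟨b, n, b', hn, by simp, hl, by grind⟩
  by_cases e2 : a = b'
  · obtain ⟨n, hn, hl, hz⟩ := back b' b hbb.symm hb hP e2 h3
    exact ⟨b', n, b, hn, by simp, hl, by grind⟩
  have a1 := h1.resolve_left e1
  have a2 := h2.resolve_left e2
  by_cases e3 : a' = b
  · subst e3
    exact ⟨b', a :: m, a', hP.cons a2.symm (by grind), by simp, by simp, by grind⟩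
  by_cases e4 : a' = b'
  · subst e4
    exact ⟨b, a :: m, a', hP.cons a1.symm (by grind), by simp, by simp, by grind⟩
  have a4 := h4.resolve_left e4
  refine ⟨b, a :: (m ++ [a']), b', ?_, by simp, by simp; omega, by grind⟩
  have h5 := Pth.concat (l := b :: a :: m) (hP.cons a1.symm (by grind)) a4 (by grind)
  simpa using h5

theorem mids {V : Type} [Fintype V] {G : SimpleGraph V} (T : TS G) {x b b' c0 : V}
    (hbb : b ≠ b') (h0 : Light T x b b' c0) :
    ∃ a a' c2, Light T x b b' c2 ∧ ∀ l, LP G l → b ∉ l → b' ∉ l → a ∉ l → a' ∉ l →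
      ∀ c, Light T x b b' c → (∃ z ∈ l, z ∈ T.D c) → ¬ EndIn l (T.D c) →
        ∃ z ∈ l, z ∈ T.D c2 := by
  classical
  let cand : V × V × V × List V → Prop := fun q =>
    Light T x b b' q.1 ∧ q.2.1 ∈ T.K q.1 ∧ q.2.2.1 ∈ T.K q.1 ∧
      Pth G (q.2.1 :: (q.2.2.2 ++ [q.2.2.1])) ∧ ∀ z ∈ q.2.2.2, z ∈ T.D q.1
  -- decomposition
  have dec : ∀ l, LP G l → ∀ c, Light T x b b' c → (∃ z ∈ l, z ∈ T.D c) → ¬ EndIn l (T.D c) →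
      ∃ l1 u s v l2, l = l1 ++ u :: (s ++ v :: l2) ∧ cand (c, u, v, s) := by
    rintro l hl c hc ⟨z, hz, hzc⟩ hE
    obtain ⟨l1, w, r, hlw, hw, hl1⟩ := split_first (fun w => w ∉ T.D c) l ⟨z, hz, by simpa using hzc⟩
    rw [not_not] at hw
    have hr : ∃ z ∈ r, z ∉ T.D c := by
      rcases List.eq_nil_or_concat r with rfl | ⟨r', v, rfl⟩
      · exact absurd (Or.inr ⟨l1, w, hlw, hw⟩) hE
      · refine ⟨v, by simp, fun hv => hE (Or.inr ⟨l1 ++ w :: r', v, by simp [hlw], hv⟩)⟩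
    obtain ⟨s, v, l2, hrs, hv, hs⟩ := split_first (fun w => w ∈ T.D c) r hr
    rcases List.eq_nil_or_concat l1 with rfl | ⟨l1', u, rfl⟩
    · exact absurd (Or.inl ⟨w, r, by simpa using hlw, hw⟩) hE
    subst hrs
    subst hlw
    have hch := hl.1.1
    have hnd := hl.1.2
    simp only [List.append_assoc, List.singleton_append, List.concat_eq_append] at *
    have hu : u ∉ T.D c := hl1 u (by simp)
    refine ⟨l1', u, w :: s, v, l2, by simp, hc, ?_, ?_, ⟨?_, by grind⟩, by simpa using ⟨hw, hs⟩⟩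
    · exact T.nbr c w u hw hu (List.isChain_append_cons_cons.1 hch).2.1.symm
    · have h1 := (List.isChain_append_cons_cons.1 hch).2.2
      rcases List.eq_nil_or_concat s with rfl | ⟨s', w', rfl⟩
      · exact T.nbr c w v hw hv (List.isChain_cons_cons.1 h1).1
      · simp only [List.concat_eq_append, List.append_assoc, List.singleton_append] at h1
        rw [← List.cons_append, List.isChain_append_cons_cons] at h1
        exact T.nbr c w' v (hs w' (by simp)) hv h1.2.1
    · have h1 := (List.isChain_split.1 hch).2
      rw [← List.cons_append, ← List.cons_append, List.isChain_split (l₁ := u :: w :: s)] at h1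
      simpa using h1.1
  by_cases hex : ∃ q, cand q
  swap
  · refine ⟨b, b, c0, h0, fun l hl _ _ _ _ c hc hm hE => ?_⟩
    obtain ⟨l1, u, s, v, l2, -, h⟩ := dec l hl c hc hm hE
    exact absurd ⟨_, h⟩ hex
  obtain ⟨⟨c2, a, a', m⟩, ⟨hL, ha, ha', hP, hD⟩, hmax⟩ := exists_max cand
    (fun q => q.2.2.2.length) (Fintype.card V)
    (fun q hq => by have := hq.2.2.2.1.length_le; simp at this; omega) hex
  dsimp only at hL ha ha' hP hD hmax
  refine ⟨a, a', c2, hL, fun l hl hb hb' hal hal' c hc hm hE => ?_⟩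
  obtain ⟨l1, u, s, v, l2, rfl, hcand⟩ := dec l hl c hc hm hE
  have hlen := hmax _ hcand
  obtain ⟨-, hu, hv, -, -⟩ := hcand
  dsimp only at hlen hu hv
  by_contra hno
  push Not at hno
  obtain ⟨p, n, q, hn, hpq, hmn, hz⟩ := midpath hP hbb (fun h => hL.nb (hD b h))
    (fun h => hL.nb' (hD b' h)) (hL.adj a ha) (hL.adj' a ha) (hL.adj a' ha') (hL.adj' a' ha')
  have hub : G.Adj u b := (hc.adj u hu).resolve_left (by rintro rfl; simp at hb)
  have hub' : G.Adj u b' := (hc.adj' u hu).resolve_left (by rintro rfl; simp at hb')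
  have hvb : G.Adj v b := (hc.adj v hv).resolve_left (by rintro rfl; simp at hb)
  have hvb' : G.Adj v b' := (hc.adj' v hv).resolve_left (by rintro rfl; simp at hb')
  have hdis : ∀ z ∈ p :: (n ++ [q]), z ∉ l1 ++ u :: (s ++ v :: l2) := by
    intro z h1 h2
    rcases hz z h1 with rfl | rfl | rfl | rfl | h
    · exact hb h2
    · exact hb' h2
    · exact hal h2
    · exact hal' h2
    · exact hno z h2 (hD z h)
  have := rep_mid hl hn (by rcases hpq with ⟨rfl, rfl⟩ | ⟨rfl, rfl⟩ <;> assumption)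
    (by rcases hpq with ⟨rfl, rfl⟩ | ⟨rfl, rfl⟩ <;> apply SimpleGraph.Adj.symm <;> assumption)
    (fun z hz => by
      have := hdis z hz
      simp only [List.mem_append, List.mem_cons, not_or] at this
      tauto)
  omega

theorem lemM {V : Type} [Fintype V] {G : SimpleGraph V} (T : TS G) : ∀ (k : ℕ) (x : V),
    (T.D x).card < 2 ^ k → ∃ A : Finset V, A.card ≤ 4 * k ∧ ∀ l, LP G l →
      (∃ z ∈ l, z ∈ T.D x) → ¬ EndIn l (T.D x) → ∃ z ∈ A, z ∈ l := by
  classical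
  intro k
  induction k with
  | zero =>
    intro x hx
    have : 0 < (T.D x).card := Finset.card_pos.2 ⟨x, T.self x⟩
    rw [pow_zero] at hx
    omega
  | succ k ih =>
    intro x hx
    have hout : ∀ l : List V, (∃ z ∈ l, z ∈ T.D x) → ¬ EndIn l (T.D x) → ∃ z ∈ l, z ∉ T.D x := by
      rintro l ⟨z, hz, -⟩ hE
      cases l with
      | nil => simp at hz
      | cons v t => exact ⟨v, by simp, fun h => hE (Or.inl ⟨v, t, rfl, h⟩)⟩
    have hsub : ∀ c ∈ T.D x, ∀ l : List V, ¬ EndIn l (T.D x) → ¬ EndIn l (T.D c) := by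
      rintro c hc l hE (⟨v, t, h, hv⟩ | ⟨t, v, h, hv⟩)
      · exact hE (Or.inl ⟨v, t, h, T.trans x c hc hv⟩)
      · exact hE (Or.inr ⟨t, v, h, T.trans x c hc hv⟩)
    rcases setup T x with ⟨a, ha⟩ | ⟨b, b', hbb, hset⟩
    · refine ⟨{a}, by simp; omega, fun l hl hm hE => ⟨a, by simp, ha l hl hm (hout l hm hE)⟩⟩
    by_cases hex : ∃ c0, Light T x b b' c0
    swap
    · refine ⟨{b, b'}, (Finset.card_le_two).trans (by omega), fun l hl hm hE => ?_⟩
      by_contra hno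
      push Not at hno
      obtain ⟨c, hc, -⟩ := hset l hl hm (hout l hm hE) (hno b (by simp)) (hno b' (by simp))
      exact hex ⟨c, hc⟩
    obtain ⟨c0, h0⟩ := hex
    obtain ⟨a, a', c2, hL, hmid⟩ := mids T hbb h0
    obtain ⟨A, hA, hAl⟩ := ih c2 (by have := hL.card; rw [pow_succ] at hx; omega)
    refine ⟨{b, b', a, a'} ∪ A, ?_, fun l hl hm hE => ?_⟩
    · have h1 := Finset.card_union_le {b, b', a, a'} A
      have h2 : ({b, b', a, a'} : Finset V).card ≤ 4 := Finset.card_le_four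
      omega
    by_contra hno
    push Not at hno
    simp only [Finset.mem_union, Finset.mem_insert, Finset.mem_singleton] at hno
    have n1 := hno b (by simp)
    have n2 := hno b' (by simp)
    obtain ⟨c, hc, hmc⟩ := hset l hl hm (hout l hm hE) n1 n2
    have h1 := hmid l hl n1 n2 (hno a (by simp)) (hno a' (by simp)) c hc hmc (hsub c hc.mem l hE)
    obtain ⟨z, hz, hzl⟩ := hAl l hl h1 (hsub c2 hL.mem l hE)
    exact hno z (by simp [hz]) hzl

theorem lemO {V : Type} [Fintype V] {G : SimpleGraph V} (T : TS G) : ∀ (k : ℕ) (x : V),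
    (T.D x).card < 2 ^ k → ∃ A : Finset V, A.card ≤ k * (4 * k + 1) ∧ ∀ l, LP G l →
      (∃ z ∈ l, z ∈ T.D x) → (∃ z ∈ l, z ∉ T.D x) → ∃ z ∈ A, z ∈ l := by
  classical
  intro k
  induction k with
  | zero =>
    intro x hx
    have : 0 < (T.D x).card := Finset.card_pos.2 ⟨x, T.self x⟩
    rw [pow_zero] at hx
    omega
  | succ k ih =>
    intro x hx
    rcases setup T x with ⟨a, ha⟩ | ⟨b, b', hbb, hset⟩
    · refine ⟨{a}, by simp; nlinarith, fun l hl hm hE => ⟨a, by simp, ha l hl hm hE⟩⟩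
    by_cases hex : ∃ c0, Light T x b b' c0
    swap
    · refine ⟨{b, b'}, (Finset.card_le_two).trans (by nlinarith), fun l hl hm hE => ?_⟩
      by_contra hno
      push Not at hno
      obtain ⟨c, hc, -⟩ := hset l hl hm hE (hno b (by simp)) (hno b' (by simp))
      exact hex ⟨c, hc⟩
    obtain ⟨c0, h0⟩ := hex
    obtain ⟨e, c1, hL1, hend⟩ := ends T h0
    obtain ⟨a, a', c2, hL, hmid⟩ := mids T hbb h0
    obtain ⟨A, hA, hAl⟩ := lemM T k c2 (by have := hL.card; rw [pow_succ] at hx; omega)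
    obtain ⟨B, hB, hBl⟩ := ih c1 (by have := hL1.card; rw [pow_succ] at hx; omega)
    refine ⟨{b, b', e, a, a'} ∪ A ∪ B, ?_, fun l hl hm hE => ?_⟩
    · have h1 := Finset.card_union_le {b, b', e, a, a'} A
      have h3 := Finset.card_union_le ({b, b', e, a, a'} ∪ A) B
      have h2 : ({b, b', e, a, a'} : Finset V).card ≤ 5 := Finset.card_le_five
      nlinarith
    by_contra hno
    push Not at hno
    simp only [Finset.mem_union, Finset.mem_insert, Finset.mem_singleton] at hno
    have n1 := hno b (by simp)
    have n2 := hno b' (by simp)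
    by_cases hcE : ∃ c, Light T x b b' c ∧ EndIn l (T.D c)
    · obtain ⟨c, hc, hcE⟩ := hcE
      have h1 := hend l hl n1 (hno e (by simp)) hE c hc hcE
      obtain ⟨y, hy, hyx⟩ := hE
      obtain ⟨z, hz, hzl⟩ := hBl l hl h1 ⟨y, hy, fun h => hyx (T.trans x c1 hL1.mem h)⟩
      exact hno z (by simp [hz]) hzl
    · push Not at hcE
      obtain ⟨c, hc, hmc⟩ := hset l hl hm hE n1 n2
      have h1 := hmid l hl n1 n2 (hno a (by simp)) (hno a' (by simp)) c hc hmc (hcE c hc)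
      obtain ⟨z, hz, hzl⟩ := hAl l hl h1 (hcE c2 hL)
      exact hno z (by simp [hz]) hzl

theorem child {V : Type} {G : SimpleGraph V} (T : TS G) {y w : V} (hw : w ∈ T.D y) (hwy : w ≠ y) :
    ∃ c, w ∈ T.D c ∧ (T.D c).card < (T.D y).card ∧ ∀ u ∈ T.K c, u = y ∨ u ∈ T.K y := by
  classical
  obtain ⟨c, hc, hcm⟩ := Finset.exists_max_image
    ((T.D y).filter fun c => w ∈ T.D c ∧ c ≠ y) (fun c => (T.D c).card)
    ⟨w, by simp [hw, T.self, hwy]⟩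
  simp only [Finset.mem_filter] at hc hcm
  obtain ⟨z, hzy, hcz, hzc, -, hK⟩ := T.parent y c hc.1 hc.2.2
  have h1 : (T.D c).card < (T.D z).card := by
    apply Finset.card_lt_card
    rw [Finset.ssubset_iff_of_subset (T.trans z c hcz)]
    exact ⟨z, T.self z, hzc⟩
  have h2 : z = y := by
    by_contra h
    have := hcm z ⟨hzy, T.trans z c hcz hc.2.1, h⟩
    omega
  subst h2
  exact ⟨c, hc.2.1, h1, hK⟩

theorem stay {V : Type} {G : SimpleGraph V} (T : TS G) {c : V} {l : List V}
    (hl : l.IsChain G.Adj) (hK : ∀ u ∈ T.K c, u ∉ l) (hm : ∃ z ∈ l, z ∈ T.D c) :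
    ∀ z ∈ l, z ∈ T.D c := by
  by_contra h
  push Not at h
  obtain ⟨w, u, hw, hu, h⟩ := crossing (T.D c) l hl hm h
  rcases h with ⟨l1, l2, rfl⟩ | ⟨l1, l2, rfl⟩
  · exact hK u (T.nbr c w u hw hu (List.isChain_append_cons_cons.1 hl).2.1) (by simp)
  · exact hK u (T.nbr c w u hw hu (List.isChain_append_cons_cons.1 hl).2.1.symm) (by simp)

theorem sink {V : Type} [Fintype V] {G : SimpleGraph V} (hconn : G.Connected) (T : TS G) :
    ∃ y a a', ∀ l, LP G l → a ∉ l → a' ∉ l → (∃ z ∈ l, z ∈ T.D y) ∧ ∃ z ∈ l, z ∉ T.D y := by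
  classical
  let P : V → Prop := fun y => ∃ a, ∀ l, LP G l → a ∉ l → ∃ z ∈ l, z ∈ T.D y
  obtain ⟨t, ht⟩ := T.root
  have hPt : P t := by
    refine ⟨t, fun l hl _ => ?_⟩
    obtain ⟨z, hz, -⟩ := hl.inter hconn hl
    exact ⟨z, hz, ht z⟩
  obtain ⟨y, hy, hmin⟩ := Finset.exists_min_image (Finset.univ.filter P) (fun y => (T.D y).card)
    ⟨t, by simp [hPt]⟩
  simp only [Finset.mem_filter, Finset.mem_univ, true_and] at hy hmin
  obtain ⟨a, ha⟩ := hy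
  suffices h : ∃ a', ∀ l, LP G l → a' ∉ l → ∃ z ∈ l, z ∉ T.D y by
    obtain ⟨a', ha'⟩ := h
    exact ⟨y, a, a', fun l hl h1 h2 => ⟨ha l hl h1, ha' l hl h2⟩⟩
  let B : V → Prop := fun u => u = y ∨ u ∈ T.K y
  have hBadj : ∀ u v, B u → B v → u ≠ v → G.Adj u v := by
    rintro u v (rfl | hu) (rfl | hv) huv
    · exact absurd rfl huv
    · exact T.adjK _ v hv
    · exact (T.adjK _ u hu).symm
    · exact T.cliqueK y u v hu hv huv
  -- a path avoiding the bag and meeting `D y` is inside a child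
  have hin : ∀ l : List V, l.IsChain G.Adj → (∀ u ∈ l, ¬ B u) → (∃ z ∈ l, z ∈ T.D y) →
      ∃ c, ¬ P c ∧ ∀ z ∈ l, z ∈ T.D c := by
    rintro l hl hB ⟨w, hwl, hw⟩
    obtain ⟨c, hwc, hcard, hK⟩ := child T hw (fun h => hB w hwl (Or.inl h))
    refine ⟨c, fun hPc => ?_, stay T hl (fun u hu hul => hB u hul (hK u hu)) ⟨w, hwl, hwc⟩⟩
    have := hmin c hPc
    omega
  by_cases hcase : ∃ l0, LP G l0 ∧ ∀ u ∈ l0, ¬ B u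
  · obtain ⟨l0, hl0, hB⟩ := hcase
    by_cases hm : ∃ z ∈ l0, z ∈ T.D y
    · obtain ⟨c, hc, hall⟩ := hin l0 hl0.1.1 hB hm
      refine absurd ⟨y, fun l hl _ => ?_⟩ hc
      obtain ⟨z, hz, hz0⟩ := hl.inter hconn hl0
      exact ⟨z, hz, hall z hz0⟩
    · push Not at hm
      refine ⟨y, fun l hl _ => ?_⟩
      obtain ⟨z, hz, hz0⟩ := hl.inter hconn hl0
      exact ⟨z, hz, hm z hz0⟩
  push Not at hcase
  obtain ⟨⟨a', m⟩, ⟨ha', hP, hm⟩, hmax⟩ := exists_max (α := V × List V)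
    (fun q => B q.1 ∧ Pth G (q.1 :: q.2) ∧ ∀ z ∈ q.2, ¬ B z) (fun q => q.2.length)
    (Fintype.card V) (fun q hq => by have := hq.2.1.length_le; simp at this; omega)
    ⟨(y, []), Or.inl rfl, ⟨by simp, by simp⟩, by simp⟩
  dsimp only at ha' hP hm hmax
  have key : ∀ l, LP G l → a' ∉ l → ∃ z ∈ l, z ∈ m := by
    intro l hl hal
    by_contra hno
    push Not at hno
    obtain ⟨u0, hu0, hu0B⟩ := hcase l hl
    obtain ⟨l1, u, s, rfl, hu, hs⟩ := split_last (fun z => ¬ B z) l ⟨u0, hu0, not_not.2 hu0B⟩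
    rw [not_not] at hu
    have hnd := hl.1.2
    have h1 := hmax (u, s) ⟨hu, ⟨(List.isChain_split.1 hl.1.1).2, by grind⟩, hs⟩
    have h2 := rep_end hl hP (hBadj u a' hu ha' (by rintro rfl; simp at hal)) (by grind)
    dsimp only at h1
    omega
  refine ⟨a', fun l hl hal => ?_⟩
  obtain ⟨z, hz, hzm⟩ := key l hl hal
  refine ⟨z, hz, fun hzy => ?_⟩
  obtain ⟨c, hc, hall⟩ := hin m (hP.1.tail) hm ⟨z, hzm, hzy⟩
  refine hc ⟨a', fun l hl hal => ?_⟩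
  obtain ⟨z, hz, hzm⟩ := key l hl hal
  exact ⟨z, hz, hall z hzm⟩

theorem main_bound {V : Type} [Fintype V] {G : SimpleGraph V} (hconn : G.Connected)
    (hc : IsChordal G) : ∃ A : Finset V,
      A.card ≤ (4 * (1 + Nat.log 2 (Fintype.card V)) + 5) * (1 + Nat.log 2 (Fintype.card V)) ∧
      ∀ l, LP G l → ∃ z ∈ A, z ∈ l := by
  classical
  obtain ⟨T⟩ := exists_TS hconn hc
  obtain ⟨y, a, a', h⟩ := sink hconn T
  obtain ⟨A, hA, hAl⟩ := lemO T (1 + Nat.log 2 (Fintype.card V)) y (by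
    rw [add_comm]
    exact (Finset.card_le_univ _).trans_lt (Nat.lt_pow_succ_log_self (by norm_num) _))
  have hk : 1 ≤ 1 + Nat.log 2 (Fintype.card V) := by omega
  generalize 1 + Nat.log 2 (Fintype.card V) = k at *
  refine ⟨{a, a'} ∪ A, ?_, fun l hl => ?_⟩
  · have h1 := Finset.card_union_le {a, a'} A
    have h2 : ({a, a'} : Finset V).card ≤ 2 := Finset.card_le_two
    nlinarith
  by_contra hno
  push Not at hno
  simp only [Finset.mem_union, Finset.mem_insert, Finset.mem_singleton] at hno
  obtain ⟨h1, h2⟩ := h l hl (hno a (by simp)) (hno a' (by simp))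
  obtain ⟨z, hz, hzl⟩ := hAl l hl h1 h2
  exact hno z (by simp [hz]) hzl

theorem LP_of_longest {V : Type} {G : SimpleGraph V} {a b : V} {p : G.Walk a b}
    (hp : IsLongestPath G p) : LP G p.support := by
  refine ⟨⟨p.isChain_adj_support, hp.1.support_nodup⟩, fun l hl => ?_⟩
  by_cases hne : l = []
  · simp [hne]
  · have := hp.2 _ _ (Walk.ofSupport l hne hl.1) (by
      rw [Walk.isPath_def, Walk.support_ofSupport]; exact hl.2)
    rw [Walk.length_ofSupport] at this
    rw [Walk.length_support]
    omega

end LPT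

/-- If `G` is a connected `n`-vertex chordal graph, then
`lpt(G) ≤ (4(1 + ⌊log₂ n⌋) + 5)(1 + ⌊log₂ n⌋)`. -/
theorem lpt_le_of_connected_chordal {V : Type} [Fintype V] (G : SimpleGraph V)
    (hconn : G.Connected) (hchordal : IsChordal G) :
    lpt G ≤ (4 * (1 + Nat.log 2 (Fintype.card V)) + 5) * (1 + Nat.log 2 (Fintype.card V)) := by
  obtain ⟨A, hA, hAl⟩ := LPT.main_bound hconn hchordal
  refine le_trans (Nat.sInf_le ?_) hA
  refine ⟨(A : Set V), A.finite_toSet, Set.ncard_coe_finset A, fun a b p hp => ?_⟩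
  obtain ⟨z, hz, hzl⟩ := hAl _ (LPT.LP_of_longest hp)
  exact ⟨z, by simpa using hz, hzl⟩
end

section
/- Let G be a chordal graph with a tree representation T, let X be a rooted subtree of T with root x, and let H be a subgraph of G such that H has a core vertex in X but x is not a core vertex of H. Then there is a vertex w ∈ V(H) such that V(S(w)) ⊆ V(X) \ {x}. -/
open SimpleGraph

/-- If a subgraph `H` of `G` has a core vertex in the subtree `X` of `T`
rooted at `x` (with `T` rooted at `r`), but `x` is not a core vertex of `H`, then some
`w ∈ V(H)` has `V(S(w)) ⊆ V(X) \ {x}`. -/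
theorem subtree_in_rooted_subtree_of_core {V W : Type} (G : SimpleGraph V)
    (T : SimpleGraph W) (hchordal : IsChordal G) (R : TreeRep G T) (r x : W)
    (H : G.Subgraph)
    (hin : ∃ t ∈ R.core H, t ∈ rootedSubtree T r x)
    (hx : x ∉ R.core H) :
    ∃ w ∈ H.verts, R.S w ⊆ rootedSubtree T r x \ {x} := by
  obtain ⟨t, ⟨u, v, huv, htu, htv⟩, htX⟩ := hin
  have key : ∀ a : V, t ∈ R.S a → x ∉ R.S a → R.S a ⊆ rootedSubtree T r x \ {x} := by
    classical
    intro a hta hxa s hs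
    refine ⟨?_, fun h => hxa (h ▸ hs)⟩
    intro p hp
    by_contra hxp
    obtain ⟨q⟩ := (R.subtree_connected a).preconnected ⟨s, hs⟩ ⟨t, hta⟩
    let q' : T.Walk s t := q.map (SimpleGraph.Embedding.induce (R.S a)).toHom
    have hq' : x ∉ q'.support := by
      intro h
      have h' := (SimpleGraph.Walk.support_map
        (SimpleGraph.Embedding.induce (G := T) (R.S a)).toHom q) ▸ h
      obtain ⟨y, -, rfl⟩ := List.mem_map.1 h'
      exact hxa y.2
    have h1 := htX (p.append q').bypass (SimpleGraph.Walk.bypass_isPath _)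
    have h2 := SimpleGraph.Walk.support_bypass_subset_support _ h1
    rcases SimpleGraph.Walk.mem_support_append_iff _ _ |>.1 h2 with h | h
    · exact hxp h
    · exact hq' h
  by_cases hxu : x ∈ R.S u
  · exact ⟨v, huv.snd_mem, key v htv fun hxv => hx ⟨u, v, huv, hxu, hxv⟩⟩
  · exact ⟨u, huv.fst_mem, key u htu hxu⟩
end
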